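/- arXiv:1610.01916 — 3 statements merged into one kernel-verified Lean document; each statement's English description precedes it below -/
import Mathlib

section
/- Uniqueness of P-asymptotic expansions (Lemma 4.4): Let d ≥ 1, let P be holomorphic on D(0;R) with P(0) = 0 and P not identically zero, and let Π = Π_P(a,b;R) be a P-sector. Let f : Π → ℂ be holomorphic and suppose (f_n) and (g_n) are sequences of holomorphic functions on D(0;ρ) (0 < ρ ≤ R) and (C_n) are constants with |f(x) − f_n(x)| ≤ C_n·|P(x)|^n and |f(x) − g_n(x)| ≤ C_n·|P(x)|^n for all n ∈ ℕ and all x ∈ Π ∩ D(0;ρ). Then for every n there exist ρ_n > 0 and a holomorphic function h_n on D(0;ρ_n) with f_n(x) − g_n(x) = h_n(x)·P(x)^n for all x ∈ D(0;ρ_n). -/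
open Set Complex

noncomputable section

/-- Open polydisk of radius `r` centered at `0` in `ℂ^d`. -/
def polydisk (d : ℕ) (r : ℝ) : Set (Fin d → ℂ) :=
  {x | ∀ j, ‖x j‖ < r}

/-- The `P`-sector `Π_P(a,b;r)`. -/
def PSector (d : ℕ) (P : (Fin d → ℂ) → ℂ) (a b r : ℝ) : Set (Fin d → ℂ) :=
  {x | (∀ j, 0 < ‖x j‖ ∧ ‖x j‖ < r) ∧ P x ≠ 0 ∧
    ∃ θ ∈ Set.Ioo a b, P x = (‖P x‖ : ℂ) * Complex.exp (θ * Complex.I)}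

open Filter Topology Metric in
/-- superposition operators by analytic functions are analytic on `C(K, E)`. -/
lemma exists_superposition {K : Type} [TopologicalSpace K] [CompactSpace K] {d : ℕ}
    (F : (Fin d → ℂ) → ℂ) (hF : AnalyticAt ℂ F 0) :
    ∃ r0 : ℝ, 0 < r0 ∧ ∃ Fh : C(K, Fin d → ℂ) → C(K, ℂ),
      ∀ y, ‖y‖ < r0 → AnalyticAt ℂ Fh y ∧ ∀ k, Fh y k = F (y k) := by
  obtain ⟨p, r, hp⟩ := hF
  let q : FormalMultilinearSeries ℂ (C(K, Fin d → ℂ)) (C(K, ℂ)) := fun n =>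
    MultilinearMap.mkContinuous
      { toFun := fun y => ⟨fun k => p n (fun i => y i k), by fun_prop⟩
        map_update_add' := by
          intro _ m i x y
          ext k
          have e : ∀ z : C(K, Fin d → ℂ), (fun j => (Function.update m i z) j k)
              = Function.update (fun j => m j k) i (z k) := by
            intro z; ext1 j
            by_cases h : j = i
            · subst h; simp
            · simp [h]
          simp [e]
        map_update_smul' := by
          intro _ m i c x
          ext k
          have e : ∀ z : C(K, Fin d → ℂ), (fun j => (Function.update m i z) j k)
              = Function.update (fun j => m j k) i (z k) := by
            intro z; ext1 j
            by_cases h : j = i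
            · subst h; simp
            · simp [h]
          simp [e] } ‖p n‖ (by
        intro y
        rw [ContinuousMap.norm_le _ (by positivity)]
        intro k
        refine ((p n).le_opNorm _).trans ?_
        gcongr with i
        exact (y i).norm_coe_le_norm k)
  have hq : ∀ n, ‖q n‖ ≤ ‖p n‖ := fun n => MultilinearMap.mkContinuous_norm_le _ (norm_nonneg _) _
  have hqa : ∀ n (y : C(K, Fin d → ℂ)) k, q n (fun _ => y) k = p n (fun _ => y k) := 
    fun n y k => rfl
  obtain ⟨r0, h0, h1⟩ := ENNReal.lt_iff_exists_nnreal_btwn.1 hp.r_pos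
  have hr0 : (r0 : ENNReal) < p.radius := h1.trans_le hp.r_le
  obtain ⟨C, hC, hb⟩ := p.norm_mul_pow_le_of_lt_radius hr0
  have hqr : (r0 : ENNReal) ≤ q.radius := q.le_radius_of_bound C fun n => by
    refine le_trans ?_ (hb n)
    gcongr
    exact hq n
  have hqs := q.hasFPowerSeriesOnBall (h0.trans_le hqr)
  refine ⟨r0, by simpa using h0, q.sum, fun y hy => ?_⟩
  have hyb : y ∈ Metric.eball (0 : C(K, Fin d → ℂ)) r0 := by
    simpa [Metric.mem_eball, edist_zero_right, enorm_eq_nnnorm, ← NNReal.coe_lt_coe] using hy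
  refine ⟨hqs.analyticAt_of_mem (Metric.eball_subset_eball hqr hyb), fun k => ?_⟩
  have hs := hqs.hasSum (Metric.eball_subset_eball hqr hyb)
  rw [zero_add] at hs
  have hs2 := (ContinuousMap.evalCLM ℂ k : C(K, ℂ) →L[ℂ] ℂ).hasSum hs
  have hyk : y k ∈ Metric.eball (0 : Fin d → ℂ) r := by
    refine Metric.eball_subset_eball h1.le ?_
    have : ‖y k‖ < r0 := (y.norm_coe_le_norm k).trans_lt hy
    simpa [Metric.mem_eball, edist_zero_right, enorm_eq_nnnorm, ← NNReal.coe_lt_coe] using this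
  have hs3 := hp.hasSum hyk
  rw [zero_add] at hs3
  exact hs2.unique hs3

open Filter Topology Metric in
lemma one_var (p g : ℂ → ℂ) (ε : ℝ) (hε : 0 < ε) (hp : AnalyticOnNhd ℂ p (closedBall 0 ε))
    (hg : AnalyticOnNhd ℂ g (closedBall 0 ε)) (hpne : ∀ s ∈ sphere (0:ℂ) ε, p s ≠ 0) (n : ℕ) (C : ℝ)
    (hbd : ∀ s0 ∈ closedBall (0:ℂ) ε, (∀ᶠ s in 𝓝[≠] s0, p s ≠ 0) → p s0 = 0 → 
      ∃ᶠ s in 𝓝[≠] s0, p s ≠ 0 ∧ ‖g s‖ ≤ C * ‖p s‖ ^ n) :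
    g 0 = Real.circleAverage (fun s => g s / p s ^ n) 0 ε * p 0 ^ n := by
  have hne : ∀ s0 ∈ closedBall (0:ℂ) ε, ∀ᶠ s in 𝓝[≠] s0, p s ≠ 0 := by
    intro s0 hs0
    by_contra hcon
    have h1 := hp.eqOn_zero_of_preconnected_of_frequently_eq_zero
      (convex_closedBall (0:ℂ) ε).isPreconnected hs0 (by
        rw [Filter.not_eventually] at hcon
        exact hcon.mono fun s hs => not_not.1 hs)
    have h2 : (ε : ℂ) ∈ sphere (0:ℂ) ε := by simp [abs_of_pos hε]
    exact hpne _ h2 (h1 (sphere_subset_closedBall h2))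
  set q : ℂ → ℂ := fun s => g s / p s ^ n with hqdef
  have hqm : MeromorphicOn q (closedBall 0 ε) := fun s hs =>
    (hg s hs).meromorphicAt.div ((hp s hs).meromorphicAt.pow n)
  have hord : ∀ s0 ∈ closedBall (0:ℂ) ε, 0 ≤ meromorphicOrderAt q s0 := by
    intro s0 hs0
    by_cases h0 : p s0 = 0
    · by_contra hneg
      push Not at hneg
      have ht := tendsto_cobounded_of_meromorphicOrderAt_neg hneg
      rw [← tendsto_norm_atTop_iff_cobounded] at ht
      obtain ⟨s, h1, h2⟩ := ((hbd s0 hs0 (hne s0 hs0) h0).and_eventually 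
        (ht.eventually_gt_atTop C)).exists
      have : ‖q s‖ ≤ C := by
        rw [hqdef]
        simp only [norm_div, norm_pow]
        rw [div_le_iff₀ (by have := h1.1; positivity)]
        exact h1.2
      linarith
    · have : AnalyticAt ℂ q s0 := (hg s0 hs0).div ((hp s0 hs0).pow n) (pow_ne_zero _ h0)
      exact this.meromorphicOrderAt_nonneg
  set Q := toMeromorphicNFOn q (closedBall 0 ε) with hQ
  have hQa : AnalyticOnNhd ℂ Q (closedBall 0 ε) := by
    intro s hs
    rw [← (meromorphicNFOn_toMeromorphicNFOn q _ hs).meromorphicOrderAt_nonneg_iff_analyticAt,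
      meromorphicOrderAt_toMeromorphicNFOn hqm hs]
    exact hord s hs
  have hev : ∀ s ∈ closedBall (0:ℂ) ε, g s = Q s * p s ^ n := by
    intro s hs
    have h1 : g =ᶠ[𝓝[≠] s] fun s => Q s * p s ^ n := by
      filter_upwards [hne s hs, hqm.toMeromorphicNFOn_eq_self_on_nhdsNE hs] with t h1 h2
      rw [hQ, h2, hqdef]
      field_simp
    have h2 := (AnalyticAt.frequently_eq_iff_eventually_eq (hg s hs)
      ((hQa s hs).mul ((hp s hs).pow n))).1 h1.frequently
    exact h2.self_of_nhds
  have h00 : (0:ℂ) ∈ closedBall (0:ℂ) ε := by simp [hε.le]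
  have hc : Real.circleAverage q 0 ε = Q 0 := by
    rw [← circleAverage_of_differentiable_on_off_countable (f := Q) (R := ε) (c := 0) 
      countable_empty]
    · apply Real.circleAverage_congr_sphere
      intro s hs
      rw [abs_of_pos hε] at hs
      have := hev s (sphere_subset_closedBall hs)
      have h3 := hpne s hs
      simp only [hqdef]
      rw [this]; field_simp
    · rw [abs_of_pos hε]; exact hQa.continuousOn
    · intro z hz
      rw [abs_of_pos hε] at hz
      exact (hQa z (ball_subset_closedBall hz.1)).differentiableAt
  rw [hc, ← hev 0 h00]

open Filter Topology Metric in
lemma analytic_avg {d : ℕ} (F P : (Fin d → ℂ) → ℂ) (hF : AnalyticAt ℂ F 0) (hP : AnalyticAt ℂ P 0)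
    (v : Fin d → ℂ) (n : ℕ) : ∃ r1 : ℝ, 0 < r1 ∧ ∀ ε > 0, ε * ‖v‖ < r1 / 2 → ∀ δ ≤ r1 / 2,
      (∀ x : Fin d → ℂ, ‖x‖ < δ → ∀ s ∈ sphere (0:ℂ) ε, P (x + s • v) ≠ 0) →
      AnalyticOnNhd ℂ
        (fun x => Real.circleAverage (fun s => F (x + s • v) / P (x + s • v) ^ n) 0 ε) 
        (ball 0 δ) := by
  let K := sphere (0:ℂ) 1
  obtain ⟨rF, hrF, Fh, hFh⟩ := exists_superposition (K := K) F hF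
  obtain ⟨rP, hrP, Ph, hPh⟩ := exists_superposition (K := K) P hP
  refine ⟨min rF rP, lt_min hrF hrP, fun ε hε hεv δ hδ hne x hx => ?_⟩
  rw [mem_ball_zero_iff] at hx
  let σ : C(K, Fin d → ℂ) := ⟨fun k => ((ε : ℂ) * k.1) • v, by fun_prop⟩
  let A : (Fin d → ℂ) → C(K, Fin d → ℂ) := fun x => ContinuousLinearMap.const ℂ K x + σ
  have hAa : ∀ x k, A x k = x + ((ε : ℂ) * k.1) • v := fun x k => rfl
  have hA : AnalyticAt ℂ A x :=
    ((ContinuousLinearMap.const ℂ K).analyticAt x).add analyticAt_const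
  have hAn : ∀ x, ‖x‖ < δ → ‖A x‖ < min rF rP := by
    intro x hx
    have h1 : ‖A x‖ ≤ ‖x‖ + ε * ‖v‖ := by
      rw [ContinuousMap.norm_le _ (by positivity)]
      intro k
      rw [hAa]
      refine (norm_add_le _ _).trans ?_
      have : ‖k.1‖ = 1 := by simpa using k.2
      simp [norm_smul, this, abs_of_pos hε]
    linarith
  let L : C(K, ℂ) →L[ℂ] ℂ := LinearMap.mkContinuous
    { toFun := fun f => ((2 * Real.pi)⁻¹ : ℝ) • ∫ θ in (0:ℝ)..2 * Real.pi,
        f ⟨circleMap 0 1 θ, circleMap_mem_sphere 0 zero_le_one θ⟩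
      map_add' := by
        intro f g
        simp only [ContinuousMap.add_apply]
        rw [intervalIntegral.integral_add, smul_add]
        · exact (by fun_prop : Continuous _).intervalIntegrable _ _
        · exact (by fun_prop : Continuous _).intervalIntegrable _ _
      map_smul' := by
        intro c f
        simp only [ContinuousMap.smul_apply, RingHom.id_apply]
        rw [intervalIntegral.integral_smul, smul_comm] } 1 (by
      intro f
      simp only [LinearMap.coe_mk, AddHom.coe_mk, norm_smul]
      have := intervalIntegral.norm_integral_le_of_norm_le_const (a := 0) (b := 2 * Real.pi)
        (C := ‖f‖) (f := fun θ => f ⟨circleMap 0 1 θ, circleMap_mem_sphere 0 zero_le_one θ⟩)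
        (fun θ _ => f.norm_coe_le_norm _)
      have hpi := Real.pi_pos
      rw [sub_zero, abs_of_pos (by positivity)] at this
      rw [norm_inv, Real.norm_eq_abs, abs_of_pos (by positivity), one_mul,
        inv_mul_le_iff₀ (by positivity)]
      linarith)
  have hL : ∀ f, L f = ((2 * Real.pi)⁻¹ : ℝ) • ∫ θ in (0:ℝ)..2 * Real.pi,
        f ⟨circleMap 0 1 θ, circleMap_mem_sphere 0 zero_le_one θ⟩ := fun f => rfl
  have hsph : ∀ k : K, (ε : ℂ) * k.1 ∈ sphere (0:ℂ) ε := by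
    intro k
    have : ‖k.1‖ = 1 := by simpa using k.2
    simp [this, abs_of_pos hε]
  have hunit : ∀ x, ‖x‖ < δ → IsUnit (Ph (A x) ^ n) := by
    intro x hx
    refine IsUnit.pow n ?_
    rw [ContinuousMap.isUnit_iff_forall_ne_zero]
    intro k
    rw [(hPh _ ((hAn x hx).trans_le (min_le_right _ _))).2 k, hAa]
    exact hne x hx _ (hsph k)
  have key : AnalyticAt ℂ (fun x => L (Fh (A x) * Ring.inverse (Ph (A x) ^ n))) x := by
    have h1 : AnalyticAt ℂ (fun x => Fh (A x)) x :=
      (hFh _ ((hAn x hx).trans_le (min_le_left _ _))).1.comp hA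
    have h2 : AnalyticAt ℂ (fun x => Ph (A x) ^ n) x :=
      ((hPh _ ((hAn x hx).trans_le (min_le_right _ _))).1.comp hA).pow n
    have h3 : AnalyticAt ℂ (fun x => Ring.inverse (Ph (A x) ^ n)) x := by
      obtain ⟨u, hu⟩ := hunit x hx
      have h4 := analyticAt_inverse (𝕜 := ℂ) u
      rw [hu] at h4
      exact h4.comp (f := fun x => Ph (A x) ^ n) h2
    exact (L.analyticAt _).comp (h1.mul h3)
  refine key.congr ?_
  have : ball (0 : Fin d → ℂ) δ ∈ 𝓝 x := isOpen_ball.mem_nhds (by simpa using hx)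
  filter_upwards [this] with y hy
  rw [mem_ball_zero_iff] at hy
  rw [hL, Real.circleAverage]
  congr 1
  refine intervalIntegral.integral_congr fun θ _ => ?_
  set k : K := ⟨circleMap 0 1 θ, circleMap_mem_sphere 0 zero_le_one θ⟩ with hk
  have hcm : circleMap 0 ε θ = (ε : ℂ) * k.1 := by simp [hk, circleMap]
  have hF' := (hFh _ ((hAn y hy).trans_le (min_le_left _ _))).2 k
  have hP' := (hPh _ ((hAn y hy).trans_le (min_le_right _ _))).2 k
  have hinv : Ring.inverse (Ph (A y) ^ n) k = (P (A y k) ^ n)⁻¹ := by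
    have h5 := congrArg (fun f : C(K, ℂ) => f k) (Ring.mul_inverse_cancel _ (hunit y hy))
    simp only [ContinuousMap.mul_apply, ContinuousMap.pow_apply, ContinuousMap.one_apply, hP'] at h5
    exact eq_inv_of_mul_eq_one_right h5
  simp only [ContinuousMap.mul_apply]
  rw [hcm, hinv, hF', hAa, div_eq_mul_inv]

lemma polydisk_eq {d : ℕ} {r : ℝ} (hr : 0 < r) : polydisk d r = Metric.ball 0 r := by
  ext x
  simp [polydisk, pi_norm_lt_iff hr]

open Filter Topology Metric in
/-- an affine line not parallel to any coordinate hyperplane meets these at isolated points. -/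
lemma coords_ne {d : ℕ} (x v : Fin d → ℂ) (hv : ∀ j, v j ≠ 0) (s0 : ℂ) :
    ∀ᶠ s in 𝓝[≠] s0, ∀ j, (x + s • v) j ≠ 0 := by
  rw [eventually_all]
  intro j
  have : ∀ᶠ s in 𝓝[≠] s0, s ≠ - x j / v j := by
    by_cases h : s0 = - x j / v j
    · rw [← h]; exact eventually_mem_nhdsWithin
    · exact (eventually_ne_nhds h).filter_mono nhdsWithin_le_nhds
  filter_upwards [this] with s hs h
  apply hs
  have h' : x j + s * v j = 0 := by simpa using h
  rw [eq_div_iff (hv j)]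
  linear_combination h'

open Filter Topology Metric in
lemma freq_sector (p : ℂ → ℂ) (s0 : ℂ) (hp : AnalyticAt ℂ p s0) (h0 : p s0 = 0)
    (hne : ∀ᶠ s in 𝓝[≠] s0, p s ≠ 0) (θ : ℝ) :
    ∃ᶠ s in 𝓝[≠] s0, p s ≠ 0 ∧ p s = (‖p s‖ : ℂ) * Complex.exp (θ * Complex.I) := by
  have hmap : 𝓝 (0:ℂ) ≤ map p (𝓝 s0) := by
    rcases hp.eventually_constant_or_nhds_le_map_nhds with h | h
    · exfalso
      obtain ⟨s, h1, h2⟩ := (hne.and (h.filter_mono nhdsWithin_le_nhds)).exists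
      exact h1 (h2.trans h0)
    · rwa [h0] at h
  have hfreq : ∃ᶠ w in 𝓝 (0:ℂ), w ≠ 0 ∧ w = (‖w‖ : ℂ) * Complex.exp (θ * Complex.I) := by
    have ht : Tendsto (fun t : ℝ => (t : ℂ) * Complex.exp (θ * Complex.I)) (𝓝[>] 0) (𝓝 0) := by
      have : Continuous (fun t : ℝ => (t : ℂ) * Complex.exp (θ * Complex.I)) := by fun_prop
      have h := this.tendsto 0
      simp only [Complex.ofReal_zero, zero_mul] at h
      exact h.mono_left nhdsWithin_le_nhds
    refine ht.frequently (Eventually.frequently ?_)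
    filter_upwards [self_mem_nhdsWithin] with t ht
    have ht' : 0 < t := ht
    refine ⟨by simp [ht'.ne', Complex.exp_ne_zero], ?_⟩
    simp [Complex.norm_exp_ofReal_mul_I, abs_of_pos ht']
  have h2 : ∃ᶠ s in 𝓝 s0, p s ≠ 0 ∧ p s = (‖p s‖ : ℂ) * Complex.exp (θ * Complex.I) :=
    frequently_map.1 (hfreq.filter_mono hmap)
  rw [frequently_nhdsWithin_iff]
  refine h2.mono fun s hs => ⟨hs, fun h => hs.1 ?_⟩
  rw [show s = s0 from h, h0]

open Filter Topology Metric in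
lemma main_aux {d : ℕ} (R : ℝ) (hR : 0 < R)
    (P : (Fin d → ℂ) → ℂ) (hP : AnalyticOnNhd ℂ P (ball 0 R))
    (hPne : ∃ x ∈ ball (0 : Fin d → ℂ) R, P x ≠ 0)
    (a b : ℝ) (hab : a < b) (ρ : ℝ) (hρ : 0 < ρ) (hρR : ρ ≤ R)
    (F : (Fin d → ℂ) → ℂ) (hF : AnalyticOnNhd ℂ F (ball 0 ρ)) (C : ℝ) (n : ℕ)
    (hb : ∀ x ∈ PSector d P a b R ∩ ball 0 ρ, ‖F x‖ ≤ C * ‖P x‖ ^ n) :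
    ∃ ρn > 0, ρn ≤ ρ ∧ ∃ h : (Fin d → ℂ) → ℂ,
      AnalyticOnNhd ℂ h (ball 0 ρn) ∧ ∀ x ∈ ball 0 ρn, F x = h x * P x ^ n := by
  -- choose the direction
  obtain ⟨v, hvR, hPv, hv⟩ : ∃ v ∈ ball (0 : Fin d → ℂ) R, P v ≠ 0 ∧ ∀ j, v j ≠ 0 := by
    obtain ⟨x, hx, hPx⟩ := hPne
    have hU : ∀ᶠ y in 𝓝 x, y ∈ ball (0 : Fin d → ℂ) R ∧ P y ≠ 0 :=
      Filter.Eventually.and (isOpen_ball.mem_nhds hx) ((hP x hx).continuousAt.eventually_ne hPx)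
    have hc : Tendsto (fun s : ℂ => x + s • (1 : Fin d → ℂ)) (𝓝[≠] 0) (𝓝 x) := by
      have : Continuous (fun s : ℂ => x + s • (1 : Fin d → ℂ)) := by fun_prop
      have h := this.tendsto 0
      simp only [zero_smul, add_zero] at h
      exact h.mono_left nhdsWithin_le_nhds
    obtain ⟨s, h1, h2⟩ := ((hc.eventually hU).and
      (coords_ne x (1 : Fin d → ℂ) (by simp) 0)).exists
    exact ⟨_, h1.1, h1.2, h2⟩
  have h0R : (0 : Fin d → ℂ) ∈ ball (0 : Fin d → ℂ) R := by simpa using hR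
  have h0ρ : (0 : Fin d → ℂ) ∈ ball (0 : Fin d → ℂ) ρ := by simpa using hρ
  have hline : ∀ x : Fin d → ℂ, AnalyticOnNhd ℂ (fun s : ℂ => x + s • v) univ := by
    intro x s _
    fun_prop
  have hzero : ∀ᶠ t in 𝓝[≠] (0:ℂ), P (t • v) ≠ 0 := by
    by_contra hcon
    rw [not_eventually] at hcon
    let S : Set ℂ := (fun s : ℂ => s • v) ⁻¹' ball 0 R
    have hS : IsPreconnected S := by
      have : Convex ℝ S := (convex_ball (0 : Fin d → ℂ) R).is_linear_preimage
        (f := fun s : ℂ => s • v) ⟨fun a b => add_smul a b v, fun c a => smul_assoc c a v⟩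
      exact this.isPreconnected
    have hPS : AnalyticOnNhd ℂ (fun s : ℂ => P (s • v)) S := by
      intro s hs
      have : AnalyticAt ℂ (fun s : ℂ => s • v) s := by fun_prop
      exact AnalyticAt.fun_comp (g := P) (hP _ hs) this
    have h1 := hPS.eqOn_zero_of_preconnected_of_frequently_eq_zero hS (z₀ := 0)
      (by simpa [S] using hR) (hcon.mono fun s hs => not_not.1 hs)
    have h2 : (1:ℂ) ∈ S := by simpa [S] using hvR
    exact hPv (by simpa using h1 h2)
  obtain ⟨r1, hr1, havg⟩ := analytic_avg F P (hF 0 h0ρ) (hP 0 h0R) v n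
  obtain ⟨ε, hε, hεv, hεne⟩ : ∃ ε : ℝ, 0 < ε ∧ ε * ‖v‖ < min (r1 / 2) (ρ / 2) ∧
      ∀ s ∈ sphere (0:ℂ) ε, P (s • v) ≠ 0 := by
    rw [eventually_nhdsWithin_iff, Metric.eventually_nhds_iff] at hzero
    obtain ⟨e, he, hz⟩ := hzero
    have hm : 0 < min (r1 / 2) (ρ / 2) := by positivity
    set m := min (r1 / 2) (ρ / 2)
    have hv1 : 0 < ‖v‖ + 1 := by positivity
    refine ⟨min (e / 2) (m / (‖v‖ + 1)), by positivity, ?_, fun s hs => ?_⟩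
    · have h1 : min (e / 2) (m / (‖v‖ + 1)) ≤ m / (‖v‖ + 1) := min_le_right _ _
      calc _ ≤ m / (‖v‖ + 1) * ‖v‖ := by gcongr
        _ < m := by rw [div_mul_eq_mul_div, div_lt_iff₀ hv1]; nlinarith
    · have hs' : ‖s‖ = min (e / 2) (m / (‖v‖ + 1)) := by simpa using hs
      refine hz ?_ ?_
      · rw [dist_zero_right, hs']
        exact (min_le_left _ _).trans_lt (by linarith)
      · intro h
        rw [show s = 0 from h, norm_zero] at hs'
        have : 0 < min (e / 2) (m / (‖v‖ + 1)) := by positivity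
        linarith
  have hεr : ε * ‖v‖ < r1 / 2 := hεv.trans_le (min_le_left _ _)
  have hερ : ε * ‖v‖ < ρ / 2 := hεv.trans_le (min_le_right _ _)
  have htube : ∀ᶠ x in 𝓝 (0 : Fin d → ℂ), ∀ s ∈ sphere (0:ℂ) ε, P (x + s • v) ≠ 0 := by
    refine (isCompact_sphere (0:ℂ) ε).eventually_forall_of_forall_eventually fun s hs => ?_
    have hmem : s • v ∈ ball (0 : Fin d → ℂ) R := by
      have : ‖s‖ = ε := by simpa using hs
      rw [mem_ball_zero_iff, norm_smul, this]
      linarith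
    have hc : ContinuousAt (fun z : (Fin d → ℂ) × ℂ => P (z.1 + z.2 • v)) (0, s) := by
      have h1 : ContinuousAt (fun z : (Fin d → ℂ) × ℂ => z.1 + z.2 • v) (0, s) := by fun_prop
      refine ContinuousAt.comp' (g := P) ?_ h1
      simpa using (hP _ hmem).continuousAt
    exact hc.eventually_ne (by simpa using hεne s hs)
  obtain ⟨δ0, hδ0, hδ⟩ := Metric.eventually_nhds_iff.1 htube
  set δ := min δ0 (min (r1 / 2) (ρ / 2)) with hδdef
  have hδpos : 0 < δ := by positivity
  have hδr : δ ≤ r1 / 2 := (min_le_right _ _).trans (min_le_left _ _)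
  have hδρ : δ ≤ ρ / 2 := (min_le_right _ _).trans (min_le_right _ _)
  have hne : ∀ x : Fin d → ℂ, ‖x‖ < δ → ∀ s ∈ sphere (0:ℂ) ε, P (x + s • v) ≠ 0 :=
    fun x hx => hδ (by rw [dist_zero_right]; exact hx.trans_le (min_le_left _ _))
  refine ⟨δ, hδpos, by linarith, _, havg ε hε hεr δ hδr hne, fun x hx => ?_⟩
  rw [mem_ball_zero_iff] at hx
  have hin : ∀ s ∈ closedBall (0:ℂ) ε, x + s • v ∈ ball (0 : Fin d → ℂ) ρ := by
    intro s hs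
    have hs' : ‖s‖ ≤ ε := by simpa using hs
    rw [mem_ball_zero_iff]
    have h1 := norm_add_le x (s • v)
    rw [norm_smul] at h1
    have h2 : ‖s‖ * ‖v‖ ≤ ε * ‖v‖ := by gcongr
    linarith
  have hpa : AnalyticOnNhd ℂ (fun s : ℂ => P (x + s • v)) (closedBall 0 ε) := fun s hs =>
    AnalyticAt.fun_comp (g := P) (hP _ (ball_subset_ball hρR (hin s hs))) (hline x s trivial)
  have hga : AnalyticOnNhd ℂ (fun s : ℂ => F (x + s • v)) (closedBall 0 ε) := fun s hs =>
    AnalyticAt.fun_comp (g := F) (hF _ (hin s hs)) (hline x s trivial)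
  have := one_var (fun s => P (x + s • v)) (fun s => F (x + s • v)) ε hε hpa hga (hne x hx) n C ?_
  · simpa using this
  intro s0 hs0 hev h0
  have hfr := freq_sector _ s0 (hpa s0 hs0) h0 hev ((a + b) / 2)
  have hnear : ∀ᶠ s in 𝓝[≠] s0, x + s • v ∈ ball (0 : Fin d → ℂ) ρ := by
    have hc : ContinuousAt (fun s : ℂ => x + s • v) s0 := by fun_prop
    exact (hc.eventually (isOpen_ball.mem_nhds (hin s0 hs0))).filter_mono nhdsWithin_le_nhds
  refine (hfr.and_eventually (hnear.and (coords_ne x v hv s0))).mono ?_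
  rintro s ⟨⟨h1, h2⟩, h3, h4⟩
  refine ⟨h1, hb _ ⟨⟨fun j => ⟨norm_pos_iff.2 (h4 j), ?_⟩, h1, (a + b) / 2, 
    ⟨by linarith, by linarith⟩, h2⟩, h3⟩⟩
  rw [mem_ball_zero_iff] at h3
  exact (norm_le_pi_norm _ j).trans_lt (h3.trans_le hρR)

/-- **Uniqueness of `P`-asymptotic expansions** (Lemma 4.4).
If two sequences `(f_n)`, `(g_n)` of holomorphic functions on `D(0;ρ)` both approximate a
holomorphic `f` on a `P`-sector to order `|P|^n`, then for every `n` the difference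
`f_n − g_n` is divisible by `P^n` as a germ at the origin. -/
theorem uniqueness_of_P_asymptotic_expansions
    (d : ℕ) (hd : 1 ≤ d) (R : ℝ) (hR : 0 < R)
    (P : (Fin d → ℂ) → ℂ) (hP : AnalyticOnNhd ℂ P (polydisk d R))
    (hP0 : P 0 = 0) (hPne : ∃ x ∈ polydisk d R, P x ≠ 0)
    (a b : ℝ) (hab : a < b) (hab2 : b ≤ a + 2 * Real.pi)
    (f : (Fin d → ℂ) → ℂ) (hf : AnalyticOnNhd ℂ f (PSector d P a b R))
    (ρ : ℝ) (hρ : 0 < ρ) (hρR : ρ ≤ R)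
    (fseq gseq : ℕ → (Fin d → ℂ) → ℂ) (C : ℕ → ℝ)
    (hfa : ∀ n, AnalyticOnNhd ℂ (fseq n) (polydisk d ρ))
    (hga : ∀ n, AnalyticOnNhd ℂ (gseq n) (polydisk d ρ))
    (hfb : ∀ n, ∀ x ∈ PSector d P a b R ∩ polydisk d ρ,
      ‖f x - fseq n x‖ ≤ C n * ‖P x‖ ^ n)
    (hgb : ∀ n, ∀ x ∈ PSector d P a b R ∩ polydisk d ρ,
      ‖f x - gseq n x‖ ≤ C n * ‖P x‖ ^ n) :
    ∀ n : ℕ, ∃ ρn > 0, ρn ≤ ρ ∧ ∃ h : (Fin d → ℂ) → ℂ,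
      AnalyticOnNhd ℂ h (polydisk d ρn) ∧
      ∀ x ∈ polydisk d ρn, fseq n x - gseq n x = h x * P x ^ n := by
  intro n
  obtain ⟨ρn, h1, h2, h, h3, h4⟩ := main_aux R hR P (polydisk_eq (d := d) hR ▸ hP)
    (polydisk_eq (d := d) hR ▸ hPne) a b hab ρ hρ hρR (fun x => fseq n x - gseq n x)
    (polydisk_eq (d := d) hρ ▸ (hfa n).sub (hga n)) (C n + C n) n (by
      rw [← polydisk_eq hρ]
      intro x hx
      have e1 := hfb n x hx
      have e2 := hgb n x hx
      calc ‖fseq n x - gseq n x‖ = ‖(f x - gseq n x) - (f x - fseq n x)‖ := by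
            congr 1; ring
        _ ≤ ‖f x - gseq n x‖ + ‖f x - fseq n x‖ := norm_sub_le _ _
        _ ≤ (C n + C n) * ‖P x‖ ^ n := by linarith)
  refine ⟨ρn, h1, h2, h, ?_, ?_⟩
  · rw [polydisk_eq h1]; exact h3
  · rw [polydisk_eq h1]; exact h4
end
end

section
/- Standard form of P-asymptotic expansions (Theorem 4.7, part (1)): Let d ≥ 1, ℓ an injective linear form, P holomorphic on D(0;R) with P(0) = 0 and P not identically zero, and a ∈ ℕ^d the ℓ-minimal exponent of the Taylor series of P at 0. Let Π = Π_P(θ_1,θ_2;R) be a P-sector and f : Π → ℂ holomorphic. If f admits a P-asymptotic expansion in the estimate sense, then there exist ρ > 0, a sequence (g_n) of bounded holomorphic functions on D(0;ρ) with ∂^β g_n(0) = 0 for every n and every β ∈ a + ℕ^d, and constants L_N > 0 such that |f(x) − Σ_{n<N} g_n(x)·P(x)^n| ≤ L_N·|P(x)|^N for every N ∈ ℕ and every x ∈ Π ∩ D(0;ρ). -/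
open Set Complex

noncomputable section

/-- Partial derivative in the `j`-th coordinate direction. -/
def pderivCoord {d : ℕ} (j : Fin d) (f : (Fin d → ℂ) → ℂ) : (Fin d → ℂ) → ℂ :=
  fun x => fderiv ℂ f x (Pi.single j 1)

/-- Mixed partial derivative `∂^β = ∂^{β_1}_{x_1} ⋯ ∂^{β_d}_{x_d}`. -/
def mixedPartial {d : ℕ} (β : Fin d → ℕ) (f : (Fin d → ℂ) → ℂ) : (Fin d → ℂ) → ℂ :=
  (List.finRange d).foldr (fun j g => (pderivCoord j)^[β j] g) f


/-! ### Part 1: the Banach space of absolutely summable coefficient families -/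

/-- Multi-indices. -/
abbrev PA.MI (d : ℕ) := Fin d → ℕ

namespace PA

open scoped Classical

/-- Monomials. -/
def mono {d : ℕ} (x : Fin d → ℂ) (β : MI d) : ℂ := ∏ j, x j ^ β j

/-- The space of absolutely summable families. -/
abbrev E1 (d : ℕ) := lp (fun _ : MI d => ℂ) 1

lemma mono_add {d : ℕ} (x : Fin d → ℂ) (β γ : MI d) : mono x (β + γ) = mono x β * mono x γ := by
  simp [mono, pow_add, Finset.prod_mul_distrib]

lemma mono_mul {d : ℕ} (x y : Fin d → ℂ) (β : MI d) : mono (x * y) β = mono x β * mono y β := by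
  simp [mono, mul_pow, Finset.prod_mul_distrib]

lemma norm_mono {d : ℕ} (x : Fin d → ℂ) (β : MI d) : ‖mono x β‖ = ∏ j, ‖x j‖ ^ β j := by
  simp [mono]

lemma norm_mono_le_one {d : ℕ} {x : Fin d → ℂ} (hx : ∀ j, ‖x j‖ ≤ 1) (β : MI d) :
    ‖mono x β‖ ≤ 1 := by
  rw [norm_mono]
  exact Finset.prod_le_one (fun j _ => by positivity)
    (fun j _ => pow_le_one₀ (norm_nonneg _) (hx j))

lemma E1.summ {d : ℕ} (c : E1 d) : Summable fun β => ‖c β‖ := by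
  simpa using c.2.summable (by simp)

lemma E1.norm_eq {d : ℕ} (c : E1 d) : ‖c‖ = ∑' β, ‖c β‖ := by
  simp [lp.norm_eq_tsum_rpow (p := 1) (by simp) c]

/-- Element of `E1` from a summable family. -/
def E1.mk {d : ℕ} (c : MI d → ℂ) (hc : Summable fun β => ‖c β‖) : E1 d :=
  ⟨c, memℓp_gen (by simpa using hc)⟩

@[simp] lemma E1.mk_apply {d : ℕ} (c : MI d → ℂ) (hc : Summable fun β => ‖c β‖) (β : MI d) :
    E1.mk c hc β = c β := rfl

lemma add_right_inj' {d : ℕ} (α : MI d) : Function.Injective (fun γ : MI d => γ + α) :=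
  add_left_injective α

/-- Backward shift. -/
def back {d : ℕ} (α : MI d) : E1 d →L[ℂ] E1 d :=
  LinearMap.mkContinuous
    { toFun := fun c => E1.mk (fun γ => c (γ + α)) ((E1.summ c).comp_injective (add_right_inj' α))
      map_add' := fun c c' => by ext γ; simp
      map_smul' := fun k c => by ext γ; simp } 1 (fun c => by
      rw [E1.norm_eq, one_mul, E1.norm_eq]
      exact tsum_comp_le_tsum_of_inj (E1.summ c) (fun _ => norm_nonneg _) (add_right_inj' α))

@[simp] lemma back_apply {d : ℕ} (α : MI d) (c : E1 d) (γ : MI d) :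
    back α c γ = c (γ + α) := rfl

lemma norm_back_le {d : ℕ} (α : MI d) : ‖back α‖ ≤ 1 :=
  LinearMap.mkContinuous_norm_le _ zero_le_one _

lemma hasSum_shift_aux {d : ℕ} (α : MI d) (c : MI d → ℝ) {s : ℝ} (hc : HasSum c s) :
    HasSum (fun γ => if α ≤ γ then c (γ - α) else 0) s := by
  rw [← (add_right_inj' α).hasSum_iff]
  · convert hc using 1
    ext γ
    have : α ≤ γ + α := le_add_self
    simp [this]
  · intro γ hγ
    rw [if_neg]
    intro h
    exact hγ ⟨γ - α, tsub_add_cancel_of_le h⟩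

lemma hasSum_shift_auxC {d : ℕ} (α : MI d) (c : MI d → ℂ) {s : ℂ} (hc : HasSum c s) :
    HasSum (fun γ => if α ≤ γ then c (γ - α) else 0) s := by
  rw [← (add_right_inj' α).hasSum_iff]
  · convert hc using 1
    ext γ
    have : α ≤ γ + α := le_add_self
    simp [this]
  · intro γ hγ
    rw [if_neg]
    intro h
    exact hγ ⟨γ - α, tsub_add_cancel_of_le h⟩

lemma hasSum_shift_norm {d : ℕ} (α : MI d) (c : E1 d) :
    HasSum (fun γ => ‖(if α ≤ γ then c (γ - α) else 0 : ℂ)‖) ‖c‖ := by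
  have := hasSum_shift_aux α _ (E1.summ c).hasSum
  rw [← E1.norm_eq] at this
  convert this using 2 with γ
  split_ifs <;> simp

/-- Forward shift. -/
def shift {d : ℕ} (α : MI d) : E1 d →L[ℂ] E1 d :=
  LinearMap.mkContinuous
    { toFun := fun c => E1.mk (fun γ => if α ≤ γ then c (γ - α) else 0)
        (hasSum_shift_norm α c).summable
      map_add' := fun c c' => by
        ext γ; simp only [E1.mk_apply, lp.coeFn_add, Pi.add_apply]; split_ifs <;> simp
      map_smul' := fun k c => by
        ext γ; simp } 1 (fun c => by
      rw [E1.norm_eq, one_mul]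
      exact (hasSum_shift_norm α c).tsum_eq.le)

lemma shift_apply {d : ℕ} (α : MI d) (c : E1 d) (γ : MI d) :
    shift α c γ = if α ≤ γ then c (γ - α) else 0 := rfl

lemma norm_shift_le {d : ℕ} (α : MI d) : ‖shift α‖ ≤ 1 :=
  LinearMap.mkContinuous_norm_le _ zero_le_one _

lemma back_comp_shift {d : ℕ} (α : MI d) : (back α).comp (shift α) = 1 := by
  ext c γ
  have : α ≤ γ + α := le_add_self
  simp [shift_apply, this]

lemma ev_summ {d : ℕ} (b : MI d → ℂ) {C : ℝ} (hb : ∀ β, ‖b β‖ ≤ C) (c : E1 d) :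
    Summable fun β => ‖c β * b β‖ := by
  refine Summable.of_nonneg_of_le (fun _ => norm_nonneg _) (fun β => ?_) ((E1.summ c).mul_right C)
  rw [norm_mul]
  exact mul_le_mul_of_nonneg_left (hb β) (norm_nonneg _)

/-- Pairing with a bounded family. -/
def pair {d : ℕ} (b : MI d → ℂ) {C : ℝ} (hb : ∀ β, ‖b β‖ ≤ C) : E1 d →L[ℂ] ℂ :=
  LinearMap.mkContinuous
    { toFun := fun c => ∑' β, c β * b β
      map_add' := fun c c' => by
        rw [← Summable.tsum_add (ev_summ b hb c).of_norm (ev_summ b hb c').of_norm]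
        exact tsum_congr fun β => by simp [add_mul]
      map_smul' := fun k c => by
        simp only [lp.coeFn_smul, Pi.smul_apply, smul_eq_mul, RingHom.id_apply, ← tsum_mul_left,
          mul_assoc] } C (fun c => by
      refine (norm_tsum_le_tsum_norm (ev_summ b hb c)).trans ?_
      rw [E1.norm_eq, mul_comm, ← tsum_mul_right]
      refine Summable.tsum_le_tsum (fun β => ?_) (ev_summ b hb c) ((E1.summ c).mul_right C)
      rw [norm_mul]
      exact mul_le_mul_of_nonneg_left (hb β) (norm_nonneg _))

lemma pair_apply {d : ℕ} (b : MI d → ℂ) {C : ℝ} (hb : ∀ β, ‖b β‖ ≤ C) (c : E1 d) :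
    pair b hb c = ∑' β, c β * b β := rfl

lemma pair_hasSum {d : ℕ} (b : MI d → ℂ) {C : ℝ} (hb : ∀ β, ‖b β‖ ≤ C) (c : E1 d) :
    HasSum (fun β => c β * b β) (pair b hb c) := (ev_summ b hb c).of_norm.hasSum

/-- Evaluation of a family at a point of the closed unit polydisk. -/
def ev {d : ℕ} (z : Fin d → ℂ) (hz : ∀ j, ‖z j‖ ≤ 1) : E1 d →L[ℂ] ℂ :=
  pair (mono z) (norm_mono_le_one hz)

lemma ev_hasSum {d : ℕ} (z : Fin d → ℂ) (hz : ∀ j, ‖z j‖ ≤ 1) (c : E1 d) :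
    HasSum (fun β => c β * mono z β) (ev z hz c) := pair_hasSum _ _ c

lemma ev_shift {d : ℕ} (z : Fin d → ℂ) (hz : ∀ j, ‖z j‖ ≤ 1) (α : MI d) (c : E1 d) :
    ev z hz (shift α c) = mono z α * ev z hz c := by
  refine (ev_hasSum z hz (shift α c)).unique ?_
  have h := hasSum_shift_auxC α _ ((ev_hasSum z hz c).mul_left (mono z α))
  convert h using 2 with γ
  rw [shift_apply]
  split_ifs with hγ
  · have : mono z γ = mono z (γ - α) * mono z α := by
      rw [← mono_add, tsub_add_cancel_of_le hγ]
    rw [this]; ring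
  · simp

lemma norm_ev_le {d : ℕ} (z : Fin d → ℂ) (hz : ∀ j, ‖z j‖ ≤ 1) (c : E1 d) :
    ‖ev z hz c‖ ≤ ‖c‖ := by
  rw [E1.norm_eq]
  refine tsum_of_norm_bounded (E1.summ c).hasSum (fun β => ?_)
  rw [norm_mul]
  exact mul_le_of_le_one_right (norm_nonneg _) (norm_mono_le_one hz β)

lemma mul_summ {d : ℕ} (p : E1 d) : Summable fun α => p α • shift (d := d) α := by
  refine Summable.of_norm_bounded (E1.summ p) (fun α => ?_)
  rw [norm_smul]
  exact mul_le_of_le_one_right (norm_nonneg _) (norm_shift_le α)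

/-- Multiplication operator. -/
def mulOp {d : ℕ} (p : E1 d) : E1 d →L[ℂ] E1 d := ∑' α, p α • shift α

lemma norm_mulOp_le {d : ℕ} (p : E1 d) : ‖mulOp p‖ ≤ ‖p‖ := by
  rw [E1.norm_eq]
  refine tsum_of_norm_bounded (E1.summ p).hasSum (fun α => ?_)
  rw [norm_smul]
  exact mul_le_of_le_one_right (norm_nonneg _) (norm_shift_le α)

lemma ev_mulOp {d : ℕ} (z : Fin d → ℂ) (hz : ∀ j, ‖z j‖ ≤ 1) (p c : E1 d) :
    ev z hz (mulOp p c) = ev z hz p * ev z hz c := by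
  have h1 : HasSum (fun α => p α • shift (d := d) α) (mulOp p) := (mul_summ p).hasSum
  have h2 : HasSum (fun α => ev z hz ((p α • shift (d := d) α) c)) (ev z hz (mulOp p c)) := by
    have := h1.mapL (ContinuousLinearMap.apply ℂ (E1 d) c)
    exact this.mapL (ev z hz)
  have h3 : (fun α => ev z hz ((p α • shift (d := d) α) c)) =
      fun α => p α * mono z α * ev z hz c := by
    funext α
    rw [smul_apply, map_smul, ev_shift, smul_eq_mul, mul_assoc]
  rw [h3] at h2
  exact h2.unique ((ev_hasSum z hz p).mul_right (ev z hz c))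

/-- Generalized Weierstrass division at the level of coefficients. -/
lemma division {d : ℕ} (p : E1 d) (a : MI d)
    (hp : ∑' α, ‖(if α = a then 0 else p α)‖ < ‖p a‖) (h : E1 d) :
    ∃ q r : E1 d, (∀ γ, r (γ + a) = 0) ∧
      ∀ z (hz : ∀ j, ‖z j‖ ≤ 1), ev z hz h = ev z hz q * ev z hz p + ev z hz r := by
  classical
  have hs' : Summable fun α => ‖(if α = a then 0 else p α)‖ := by
    refine Summable.of_nonneg_of_le (fun _ => norm_nonneg _) (fun α => ?_) (E1.summ p)
    split_ifs <;> simp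
  set p' : E1 d := E1.mk (fun α => if α = a then 0 else p α) hs' with hp'
  have hp'n : ‖p'‖ < ‖p a‖ := by rw [E1.norm_eq]; exact hp
  have hpa : p a ≠ 0 := by
    intro h0
    rw [h0, norm_zero] at hp'n
    exact absurd hp'n (not_lt.2 (norm_nonneg _))
  have hsplit : mulOp p = p a • shift a + mulOp p' := by
    have h1 : HasSum (fun α => (if α = a then p a • shift a else 0 : E1 d →L[ℂ] E1 d))
        (p a • shift a) := hasSum_ite_eq a _
    have h2 : HasSum (fun α => p' α • shift (d := d) α) (mulOp p') := (mul_summ p').hasSum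
    refine (mul_summ p).hasSum.unique ?_
    convert h1.add h2 using 2 with α
    by_cases hα : α = a
    · subst hα; simp [hp']
    · simp [hp', hα]
  set T : E1 d →L[ℂ] E1 d := (back a).comp (mulOp p) with hT
  have hT1 : T = p a • (1 - (-((p a)⁻¹ • (back a).comp (mulOp p')))) := by
    rw [hT, hsplit, ContinuousLinearMap.comp_add, ContinuousLinearMap.comp_smul, back_comp_shift,
      sub_neg_eq_add, smul_add, smul_smul, mul_inv_cancel₀ hpa, one_smul]
  have hU : IsUnit T := by
    have : IsUnit (1 - (-((p a)⁻¹ • (back a).comp (mulOp p')))) := by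
      apply isUnit_one_sub_of_norm_lt_one
      rw [norm_neg, norm_smul, norm_inv]
      have h3 : ‖(back a).comp (mulOp p')‖ ≤ ‖p'‖ := by
        refine (ContinuousLinearMap.opNorm_comp_le _ _).trans ?_
        calc ‖back a‖ * ‖mulOp p'‖ ≤ 1 * ‖p'‖ :=
              mul_le_mul (norm_back_le a) (norm_mulOp_le p') (norm_nonneg _) zero_le_one
          _ = _ := one_mul _
      rw [inv_mul_lt_iff₀ (norm_pos_iff.2 hpa), mul_one]
      exact h3.trans_lt hp'n
    rw [hT1]
    exact this.smul (Units.mk0 (p a) hpa)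
  obtain ⟨u, hu⟩ := hU
  refine ⟨(↑u⁻¹ : E1 d →L[ℂ] E1 d) (back a h), h - mulOp p ((↑u⁻¹ : E1 d →L[ℂ] E1 d) (back a h)),
    ?_, ?_⟩
  · intro γ
    have h5 : T ((↑u⁻¹ : E1 d →L[ℂ] E1 d) (back a h)) = back a h := by
      rw [← hu, ← mul_apply_eq_comp, Units.mul_inv, one_apply_eq_self]
    have h6 := congrArg (fun c : E1 d => c γ) h5
    simp only [hT, ContinuousLinearMap.comp_apply, back_apply] at h6
    simp [h6]
  · intro z hz
    rw [map_sub, ev_mulOp]; ring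

end PA

/-! ### Part 2: analyticity of sums of power series -/

namespace PA

open scoped Classical

lemma hasSum_pi_prod (d : ℕ) : ∀ (f : Fin d → ℕ → ℂ), (∀ j, Summable fun k => ‖f j k‖) →
    (HasSum (fun β : MI d => ∏ j, f j (β j)) (∏ j, ∑' k, f j k) ∧
      Summable fun β : MI d => ‖∏ j, f j (β j)‖) := by
  induction d with
  | zero =>
    intro f hf
    refine ⟨?_, Summable.of_finite⟩
    simp only [Finset.univ_eq_empty, Finset.prod_empty]
    exact hasSum_unique (f := fun _ : MI 0 => (1 : ℂ))
  | succ d ih =>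
    intro f hf
    obtain ⟨h1, h2⟩ := ih (fun j => f j.succ) (fun j => hf j.succ)
    have key : ∀ q : ℕ × MI d, (∏ j, f j ((Fin.consEquiv (fun _ : Fin (d + 1) => ℕ)) q j)) =
        f 0 q.1 * ∏ j : Fin d, f j.succ (q.2 j) := by
      intro q
      rw [Fin.prod_univ_succ]
      simp [Fin.consEquiv]
    have hs : Summable fun q : ℕ × MI d => ‖f 0 q.1 * ∏ j : Fin d, f j.succ (q.2 j)‖ :=
      Summable.mul_norm (f := f 0) (g := fun β : MI d => ∏ j : Fin d, f j.succ (β j)) (hf 0) h2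
    constructor
    · rw [← (Fin.consEquiv (fun _ : Fin (d + 1) => ℕ)).hasSum_iff]
      have h3 : HasSum (fun q : ℕ × MI d => f 0 q.1 * ∏ j : Fin d, f j.succ (q.2 j))
          ((∑' k, f 0 k) * ∏ j : Fin d, ∑' k, f j.succ k) :=
        HasSum.mul (f := f 0) (g := fun β : MI d => ∏ j : Fin d, f j.succ (β j))
          (hf 0).of_norm.hasSum h1 hs.of_norm
      rw [Fin.prod_univ_succ]
      rw [← funext key] at h3
      exact h3
    · rw [← (Fin.consEquiv (fun _ : Fin (d + 1) => ℕ)).summable_iff]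
      rw [← funext fun q => congrArg norm (key q)] at hs
      exact hs

lemma summ_mono {d : ℕ} {z : Fin d → ℂ} (hz : ∀ j, ‖z j‖ < 1) :
    Summable fun β => ‖mono z β‖ :=
  (hasSum_pi_prod d (fun j k => z j ^ k) (fun j => by
    simpa using summable_geometric_of_lt_one (norm_nonneg _) (hz j))).2

/-- Truncated monomial families. -/
def mt {d : ℕ} (t : Finset (Fin d)) (z : Fin d → ℂ) (β : MI d) : ℂ :=
  if ∀ j, j ∉ t → β j = 0 then mono z β else 0

lemma summ_mt {d : ℕ} (t : Finset (Fin d)) {z : Fin d → ℂ} (hz : ∀ j, ‖z j‖ < 1) :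
    Summable fun β => ‖mt t z β‖ := by
  refine Summable.of_nonneg_of_le (fun _ => norm_nonneg _) (fun β => ?_) (summ_mono hz)
  unfold mt; split_ifs <;> simp

/-- Truncated monomial families as elements of `E1`. -/
def mE {d : ℕ} (t : Finset (Fin d)) (z : Fin d → ℂ) : E1 d :=
  if h : ∀ j, ‖z j‖ < 1 then E1.mk (mt t z) (summ_mt t h) else 0

lemma mE_apply {d : ℕ} (t : Finset (Fin d)) {z : Fin d → ℂ} (hz : ∀ j, ‖z j‖ < 1) (β : MI d) :
    mE t z β = mt t z β := by
  rw [mE, dif_pos hz, E1.mk_apply]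

lemma mE_insert {d : ℕ} (t : Finset (Fin d)) {j : Fin d} (hj : j ∉ t) {z : Fin d → ℂ}
    (hz : ∀ j, ‖z j‖ < 1) :
    ((1 : E1 d →L[ℂ] E1 d) - z j • shift (Pi.single j 1)) (mE (insert j t) z) = mE t z := by
  ext γ
  simp only [sub_apply, one_apply_eq_self, smul_apply, lp.coeFn_sub, Pi.sub_apply,
    lp.coeFn_smul, Pi.smul_apply, shift_apply, smul_eq_mul, mE_apply _ hz]
  by_cases hγ : γ j = 0
  · have h1 : ¬ (Pi.single j 1 ≤ γ) := by
      intro h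
      have := h j
      simp [hγ] at this
    rw [if_neg h1, mul_zero, sub_zero]
    unfold mt
    congr 1
    apply propext
    constructor
    · intro h i hi
      by_cases hij : i = j
      · rw [hij, hγ]
      · exact h i (by simp [hij, hi])
    · intro h i hi
      exact h i (fun h' => hi (by simp [h']))
  · have h1 : (Pi.single j 1 ≤ γ) := by
      intro i
      by_cases hij : i = j
      · subst hij; simp; omega
      · simp [hij]
    rw [if_pos h1]
    have h2 : mt t z γ = 0 := by
      unfold mt
      rw [if_neg]
      intro h
      exact hγ (h j hj)
    rw [h2, sub_eq_zero]
    have h3 : mono z γ = z j * mono z (γ - Pi.single j 1) := by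
      have h4 : mono z (Pi.single j 1) = z j := by
        unfold mono
        rw [Finset.prod_eq_single j]
        · simp
        · intro i _ hij; simp [hij]
        · simp
      conv_lhs => rw [← tsub_add_cancel_of_le h1, mono_add, h4]
      ring
    unfold mt
    have h5 : (∀ i, i ∉ insert j t → γ i = 0) ↔
        (∀ i, i ∉ insert j t → (γ - Pi.single j 1 : MI d) i = 0) := by
      refine forall_congr' fun i => imp_congr_right fun hi => ?_
      have hij : i ≠ j := fun h => hi (by simp [h])
      simp [hij]
    simp only [h5, h3]
    split_ifs <;> simp

lemma isOpen_unit (d : ℕ) : IsOpen {z : Fin d → ℂ | ∀ j, ‖z j‖ < 1} := by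
  simp only [ofPred_forall]
  exact isOpen_iInter_of_finite fun j => isOpen_lt (by fun_prop) continuous_const

lemma mE_analytic {d : ℕ} (t : Finset (Fin d)) :
    AnalyticOnNhd ℂ (mE t) {z : Fin d → ℂ | ∀ j, ‖z j‖ < 1} := by
  induction t using Finset.induction_on with
  | empty =>
    have h : EqOn (fun _ => mE ∅ (0 : Fin d → ℂ)) (mE ∅) {z : Fin d → ℂ | ∀ j, ‖z j‖ < 1} := by
      intro z hz
      ext β
      change mE ∅ (0 : Fin d → ℂ) β = mE ∅ z β
      rw [mE_apply _ hz, mE_apply _ (by simp)]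
      unfold mt
      split_ifs with h
      · simp [mono, fun j => h j (by simp)]
      · rfl
    exact (analyticOnNhd_const).congr (isOpen_unit d) h
  | insert j t hj ih =>
    have h : EqOn (fun z : Fin d → ℂ => (Ring.inverse ((1 : E1 d →L[ℂ] E1 d) -
        z j • shift (Pi.single j 1))) (mE t z)) (mE (insert j t))
        {z : Fin d → ℂ | ∀ j, ‖z j‖ < 1} := by
      intro z hz
      have hU : IsUnit ((1 : E1 d →L[ℂ] E1 d) - z j • shift (Pi.single j 1)) := by
        apply isUnit_one_sub_of_norm_lt_one
        rw [norm_smul]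
        exact (mul_le_of_le_one_right (norm_nonneg _) (norm_shift_le _)).trans_lt (hz j)
      change (Ring.inverse ((1 : E1 d →L[ℂ] E1 d) - z j • shift (Pi.single j 1))) (mE t z) = _
      rw [← mE_insert t hj hz, ← mul_apply_eq_comp, Ring.inverse_mul_cancel _ hU,
        one_apply_eq_self]
    refine AnalyticOnNhd.congr (isOpen_unit d) ?_ h
    intro z hz
    have hU : IsUnit ((1 : E1 d →L[ℂ] E1 d) - z j • shift (Pi.single j 1)) := by
      apply isUnit_one_sub_of_norm_lt_one
      rw [norm_smul]
      exact (mul_le_of_le_one_right (norm_nonneg _) (norm_shift_le _)).trans_lt (hz j)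
    have hA : AnalyticAt ℂ (fun z : Fin d → ℂ =>
        ((1 : E1 d →L[ℂ] E1 d) - z j • shift (Pi.single j 1))) z := by
      refine analyticAt_const.sub (AnalyticAt.fun_smul ?_ analyticAt_const)
      exact (ContinuousLinearMap.proj (R := ℂ) (φ := fun _ : Fin d => ℂ) j).analyticAt z
    obtain ⟨u, hu⟩ := hU
    have hB : AnalyticAt ℂ (fun z : Fin d → ℂ =>
        Ring.inverse ((1 : E1 d →L[ℂ] E1 d) - z j • shift (Pi.single j 1))) z := by
      refine AnalyticAt.fun_comp (g := Ring.inverse) ?_ hA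
      rw [← hu]
      exact analyticAt_inverse u
    exact ((ContinuousLinearMap.apply ℂ (E1 d)).flip.analyticAt_bilinear
      (Ring.inverse ((1 : E1 d →L[ℂ] E1 d) - z j • shift (Pi.single j 1)), mE t z)).comp₂
      hB (ih z hz)

/-- The sum of a power series. -/
def evf {d : ℕ} (c : MI d → ℂ) (z : Fin d → ℂ) : ℂ := ∑' β, c β * mono z β

lemma ev_eq_evf {d : ℕ} (z : Fin d → ℂ) (hz : ∀ j, ‖z j‖ ≤ 1) (c : E1 d) :
    ev z hz c = evf c z := rfl

lemma evf_analytic {d : ℕ} (c : MI d → ℂ) {C : ℝ} (hc : ∀ β, ‖c β‖ ≤ C) :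
    AnalyticOnNhd ℂ (evf c) {z : Fin d → ℂ | ∀ j, ‖z j‖ < 1} := by
  have h : EqOn (fun z => pair c hc (mE Finset.univ z)) (evf c)
      {z : Fin d → ℂ | ∀ j, ‖z j‖ < 1} := by
    intro z hz
    refine tsum_congr fun β => ?_
    rw [mE_apply _ hz]
    simp [mt, mul_comm]
  refine AnalyticOnNhd.congr (isOpen_unit d) ?_ h
  intro z hz
  exact ((pair c hc).analyticAt _).fun_comp (mE_analytic Finset.univ z hz)

end PA

/-! ### Part 3: power series expansions on polydisks and mixed partials -/

namespace PA

open scoped Classical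

/-- `g` has the power series expansion with coefficients `c` on the polydisk of polyradius `s`. -/
def HS {d : ℕ} (s : Fin d → ℝ) (g : (Fin d → ℂ) → ℂ) (c : MI d → ℂ) : Prop :=
  ∀ x : Fin d → ℂ, (∀ j, ‖x j‖ < s j) → HasSum (fun β => c β * mono x β) (g x)

lemma isOpen_poly {d : ℕ} (s : Fin d → ℝ) : IsOpen {z : Fin d → ℂ | ∀ j, ‖z j‖ < s j} := by
  simp only [ofPred_forall]
  exact isOpen_iInter_of_finite fun j => isOpen_lt (by fun_prop) continuous_const

lemma HS.summ {d : ℕ} {s : Fin d → ℝ} {g : (Fin d → ℂ) → ℂ} {c : MI d → ℂ} (h : HS s g c)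
    {t : Fin d → ℝ} (ht0 : ∀ j, 0 ≤ t j) (hts : ∀ j, t j < s j) :
    Summable fun β => ‖c β * mono (fun j => (t j : ℂ)) β‖ := by
  refine (h (fun j => (t j : ℂ)) (fun j => ?_)).summable.norm
  rw [Complex.norm_real, Real.norm_of_nonneg (ht0 j)]
  exact hts j

lemma HS.analytic {d : ℕ} {s : Fin d → ℝ} {g : (Fin d → ℂ) → ℂ} {c : MI d → ℂ} (h : HS s g c) :
    AnalyticOnNhd ℂ g {x | ∀ j, ‖x j‖ < s j} := by
  intro x₀ hx₀
  have : ∀ j, ∃ t : ℝ, ‖x₀ j‖ < t ∧ t < s j := fun j => exists_between (hx₀ j)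
  choose t ht1 ht2 using this
  have ht0 : ∀ j, 0 < t j := fun j => (norm_nonneg _).trans_lt (ht1 j)
  have hsum := h.summ (fun j => (ht0 j).le) ht2
  set c' : MI d → ℂ := fun β => c β * mono (fun j => (t j : ℂ)) β with hc'
  have hb : ∀ β, ‖c' β‖ ≤ ∑' β, ‖c' β‖ := fun β => hsum.le_tsum β (fun _ _ => norm_nonneg _)
  have hA := evf_analytic c' hb
  have hL : AnalyticAt ℂ (fun x : Fin d → ℂ => fun j => (t j : ℂ)⁻¹ * x j) x₀ := by
    rw [analyticAt_pi_iff]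
    intro j
    exact analyticAt_const.mul
      ((ContinuousLinearMap.proj (R := ℂ) (φ := fun _ : Fin d => ℂ) j).analyticAt x₀)
  have hlt : ∀ x : Fin d → ℂ, (∀ j, ‖x j‖ < t j) → ∀ j, ‖(t j : ℂ)⁻¹ * x j‖ < 1 := by
    intro x hx j
    rw [norm_mul, norm_inv, Complex.norm_real, Real.norm_of_nonneg (ht0 j).le,
      inv_mul_lt_iff₀ (ht0 j), mul_one]
    exact hx j
  have hcomp : AnalyticAt ℂ (fun x : Fin d → ℂ => evf c' (fun j => (t j : ℂ)⁻¹ * x j)) x₀ :=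
    (hA _ (hlt x₀ ht1)).fun_comp hL
  refine hcomp.congr ?_
  filter_upwards [(isOpen_poly t).mem_nhds ht1] with x hx
  rw [← (h x (fun j => (hx j).trans (ht2 j))).tsum_eq]
  refine tsum_congr fun β => ?_
  rw [hc']
  simp only
  rw [mul_assoc, ← mono_mul]
  congr 2
  funext j
  have := (Complex.ofReal_ne_zero.2 (ht0 j).ne')
  simp [this]

lemma mono_update {d : ℕ} (x : Fin d → ℂ) (j : Fin d) (w : ℂ) (β : MI d) :
    mono (Function.update x j w) β = w ^ β j * ∏ i ∈ Finset.univ.erase j, x i ^ β i := by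
  unfold mono
  rw [← Finset.mul_prod_erase _ _ (Finset.mem_univ j)]
  congr 1
  · simp
  · refine Finset.prod_congr rfl fun i hi => ?_
    rw [Function.update_of_ne (Finset.ne_of_mem_erase hi)]

lemma _root_.HasSum.congr_fun' {ι : Type*} {f g : ι → ℂ} {a : ℂ} (h : HasSum f a)
    (hfg : ∀ i, g i = f i) : HasSum g a := by
  rwa [funext hfg]

lemma HS.pd {d : ℕ} {s : Fin d → ℝ} {g : (Fin d → ℂ) → ℂ} {c : MI d → ℂ} (h : HS s g c)
    (j : Fin d) :
    HS s (pderivCoord j g) (fun γ => ((γ j : ℂ) + 1) * c (γ + Pi.single j 1)) := by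
  intro x hx
  obtain ⟨t, ht1, ht2⟩ := exists_between (hx j)
  have ht0 : 0 < t := (norm_nonneg _).trans_lt ht1
  set U : Set ℂ := Metric.ball 0 t with hU
  set F : MI d → ℂ → ℂ := fun β w => c β * mono (Function.update x j w) β with hF
  have hFd : ∀ β w, HasDerivAt (F β)
      (c β * ((β j : ℂ) * w ^ (β j - 1) * ∏ i ∈ Finset.univ.erase j, x i ^ β i)) w := by
    intro β w
    simp only [hF, mono_update]
    exact ((hasDerivAt_pow (β j) w).mul_const _).const_mul _
  have hupd : ∀ w : ℂ, ‖w‖ < s j → ∀ i, ‖Function.update x j w i‖ < s i := by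
    intro w hw i
    by_cases hij : i = j
    · subst hij; simpa using hw
    · simpa [hij] using hx i
  have hu : Summable fun β => ‖F β (t : ℂ)‖ :=
    (h _ (hupd t (by rwa [Complex.norm_real, Real.norm_of_nonneg ht0.le]))).summable.norm
  have hle : ∀ β w, w ∈ U → ‖F β w‖ ≤ ‖F β (t : ℂ)‖ := by
    intro β w hw
    simp only [hF, mono_update, norm_mul, norm_pow, Complex.norm_real]
    rw [Real.norm_of_nonneg ht0.le]
    have : ‖w‖ ≤ t := by simpa [hU] using (mem_ball_zero_iff.1 hw).le
    gcongr
  have hxU : x j ∈ U := by simpa [hU] using ht1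
  have key := hasSum_deriv_of_summable_norm hu
    (fun β => fun w _ => (hFd β w).differentiableAt.differentiableWithinAt) Metric.isOpen_ball
    hle hxU
  have hd1 : deriv (fun w => ∑' β, F β w) (x j) = pderivCoord j g x := by
    have h1 : (fun w => ∑' β, F β w) =ᶠ[nhds (x j)] fun w => g (Function.update x j w) := by
      filter_upwards [Metric.isOpen_ball.mem_nhds hxU] with w hw
      exact (h _ (hupd w ((mem_ball_zero_iff.1 hw).trans ht2))).tsum_eq
    rw [h1.deriv_eq]
    have h2 : HasFDerivAt g (fderiv ℂ g x) (Function.update x j (x j)) := by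
      rw [Function.update_eq_self]
      exact (h.analytic x hx).differentiableAt.hasFDerivAt
    have h3 := h2.comp_hasDerivAt (x j) (hasDerivAt_update x j (x j))
    exact h3.deriv
  rw [hd1] at key
  have hinj : Function.Injective (fun γ : MI d => γ + Pi.single j 1) := add_left_injective _
  rw [← hinj.hasSum_iff] at key
  · refine key.congr_fun' ?_
    intro γ
    simp only [Function.comp]
    rw [(hFd _ _).deriv]
    have h4 : mono x γ = x j ^ γ j * ∏ i ∈ Finset.univ.erase j, x i ^ γ i := by
      conv_lhs => rw [← Function.update_eq_self j x, mono_update]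
    have h5 : ∏ i ∈ Finset.univ.erase j, x i ^ (γ + Pi.single j 1 : MI d) i =
        ∏ i ∈ Finset.univ.erase j, x i ^ γ i := by
      refine Finset.prod_congr rfl fun i hi => ?_
      simp [Finset.ne_of_mem_erase hi]
    rw [h4, h5]
    simp
    ring
  · intro β hβ
    rw [(hFd _ _).deriv]
    have : β j = 0 := by
      by_contra h0
      apply hβ
      refine ⟨β - Pi.single j 1, tsub_add_cancel_of_le ?_⟩
      intro i
      by_cases hij : i = j
      · subst hij; simp; omega
      · simp [hij]
    simp [this]

lemma HS.iter {d : ℕ} {s : Fin d → ℝ} {g : (Fin d → ℂ) → ℂ} {c : MI d → ℂ} (h : HS s g c)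
    (j : Fin d) (k : ℕ) : ∃ K : MI d → ℂ, (∀ γ, K γ ≠ 0) ∧
      HS s ((pderivCoord j)^[k] g) (fun γ => K γ * c (γ + Pi.single j k)) := by
  induction k with
  | zero => exact ⟨fun _ => 1, fun _ => one_ne_zero, by simpa using h⟩
  | succ k ih =>
    obtain ⟨K, hK, hH⟩ := ih
    refine ⟨fun γ => ((γ j : ℂ) + 1) * K (γ + Pi.single j 1), fun γ => ?_, ?_⟩
    · exact mul_ne_zero (by exact_mod_cast Nat.succ_ne_zero (γ j)) (hK _)
    · rw [Function.iterate_succ_apply']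
      convert hH.pd j using 1
      funext γ
      rw [mul_assoc, add_assoc γ, ← Pi.single_add, add_comm 1 k]

lemma HS.foldr {d : ℕ} {s : Fin d → ℝ} {g : (Fin d → ℂ) → ℂ} {c : MI d → ℂ} (h : HS s g c)
    (β : MI d) (l : List (Fin d)) : ∃ K : MI d → ℂ, (∀ γ, K γ ≠ 0) ∧
      HS s (l.foldr (fun j g => (pderivCoord j)^[β j] g) g)
        (fun γ => K γ * c (γ + (l.map fun j => (Pi.single j (β j) : MI d)).sum)) := by
  induction l with
  | nil => exact ⟨fun _ => 1, fun _ => one_ne_zero, by simpa using h⟩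
  | cons j l ih =>
    obtain ⟨K, hK, hH⟩ := ih
    obtain ⟨K', hK', hH'⟩ := hH.iter j (β j)
    refine ⟨fun γ => K' γ * K (γ + Pi.single j (β j)), fun γ => mul_ne_zero (hK' _) (hK _), ?_⟩
    rw [List.foldr_cons]
    convert hH' using 1
    funext γ
    rw [List.map_cons, List.sum_cons, mul_assoc, add_assoc]

lemma HS.mixed {d : ℕ} {s : Fin d → ℝ} (hs : ∀ j, 0 < s j) {g : (Fin d → ℂ) → ℂ} {c : MI d → ℂ}
    (h : HS s g c) (β : MI d) : mixedPartial β g 0 = 0 ↔ c β = 0 := by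
  obtain ⟨K, hK, hH⟩ := h.foldr β (List.finRange d)
  have h1 : ((List.finRange d).map fun j => (Pi.single j (β j) : MI d)).sum = β := by
    rw [← List.sum_toFinset _ (List.nodup_finRange d), List.toFinset_finRange]
    exact Finset.univ_sum_single β
  rw [h1] at hH
  have h2 := hH 0 (by simpa using hs)
  have h3 := hasSum_single (f := fun γ => K γ * c (γ + β) * mono (0 : Fin d → ℂ) γ) 0 (by
    intro γ hγ
    obtain ⟨i, hi⟩ := Function.ne_iff.1 hγ
    have : mono (0 : Fin d → ℂ) γ = 0 :=
      Finset.prod_eq_zero (Finset.mem_univ i) (by simpa using hi)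
    rw [this, mul_zero])
  have h4 : mixedPartial β g 0 = K 0 * c β := by
    have := h2.unique h3
    simpa [mono, mixedPartial] using this
  rw [h4]
  simp [hK 0]

end PA

/-! ### Part 4: Cauchy formula on polydisks and expansion of holomorphic functions -/

namespace PA

open scoped Classical
open MeasureTheory

lemma norm_torusMap {d : ℕ} {ρ : ℝ} (hρ : 0 < ρ) (θ : Fin d → ℝ) (j : Fin d) :
    ‖torusMap (0 : Fin d → ℂ) (fun _ => ρ) θ j‖ = ρ := by
  simp [torusMap, Complex.norm_exp_ofReal_mul_I, abs_of_pos hρ]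

lemma continuous_torusMap' {d : ℕ} (ρ : ℝ) :
    Continuous (torusMap (0 : Fin d → ℂ) (fun _ => ρ)) := by
  unfold torusMap
  fun_prop

lemma cont_comp_torus {d : ℕ} {ρ ρ₂ : ℝ} (hρ : 0 < ρ) (hρ₂ : ρ < ρ₂) {g : (Fin d → ℂ) → ℂ}
    (hg : ContinuousOn g (polydisk d ρ₂)) :
    Continuous fun θ => g (torusMap (0 : Fin d → ℂ) (fun _ => ρ) θ) :=
  hg.comp_continuous (continuous_torusMap' ρ) (fun θ j => by
    rw [norm_torusMap hρ]; exact hρ₂)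

lemma torus_sub_ne {d : ℕ} {ρ : ℝ} (hρ : 0 < ρ) {x : Fin d → ℂ} (hx : ∀ j, ‖x j‖ < ρ)
    (θ : Fin d → ℝ) (j : Fin d) : torusMap (0 : Fin d → ℂ) (fun _ => ρ) θ j - x j ≠ 0 := by
  intro h
  have h1 := norm_torusMap hρ θ j
  rw [sub_eq_zero.1 h] at h1
  exact (hx j).ne h1

lemma torusIntegrable_of_cont {d : ℕ} {ρ : ℝ} {g : (Fin d → ℂ) → ℂ}
    (h : Continuous fun θ => g (torusMap (0 : Fin d → ℂ) (fun _ => ρ) θ)) :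
    TorusIntegrable g 0 (fun _ => ρ) :=
  h.continuousOn.integrableOn_compact isCompact_Icc

lemma cauchy_torus {ρ ρ₂ : ℝ} (hρ : 0 < ρ) (hρ₂ : ρ < ρ₂) : ∀ (d : ℕ) (g : (Fin d → ℂ) → ℂ),
    DifferentiableOn ℂ g (polydisk d ρ₂) → ∀ x : Fin d → ℂ, (∀ j, ‖x j‖ < ρ) →
    torusIntegral (fun ζ => (∏ j, (ζ j - x j)⁻¹) * g ζ) (0 : Fin d → ℂ) (fun _ => ρ) =
      (2 * Real.pi * I) ^ d * g x := by
  intro d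
  induction d with
  | zero =>
    intro g hg x hx
    simp [Subsingleton.elim x 0]
  | succ d ih =>
    intro g hg x hx
    have hint : TorusIntegrable (fun ζ => (∏ j, (ζ j - x j)⁻¹) * g ζ) (0 : Fin (d+1) → ℂ)
        (fun _ => ρ) := by
      apply torusIntegrable_of_cont
      refine Continuous.mul ?_ (cont_comp_torus hρ hρ₂ hg.continuousOn)
      refine continuous_finsetProd _ fun j _ => ?_
      refine Continuous.inv₀ ?_ (fun θ => torus_sub_ne hρ hx θ j)
      exact ((continuous_apply j).comp (continuous_torusMap' ρ)).sub continuous_const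
    rw [torusIntegral_succ hint]
    have hx' : ∀ j : Fin d, ‖Fin.tail x j‖ < ρ := fun j => hx j.succ
    have hstep : ∀ ζ ∈ Metric.sphere (0 : ℂ) ρ,
        torusIntegral (fun y : Fin d → ℂ => (∏ j, ((Fin.cons ζ y : Fin (d+1) → ℂ) j - x j)⁻¹) *
          g (Fin.cons ζ y)) 0 (fun _ => ρ) =
        (ζ - x 0)⁻¹ • ((2 * Real.pi * I) ^ d * g (Fin.cons ζ (Fin.tail x))) := by
      intro ζ hζ
      have hζ' : ‖ζ‖ < ρ₂ := by rw [mem_sphere_zero_iff_norm.1 hζ]; exact hρ₂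
      have h1 := ih (fun y => g (Fin.cons ζ y)) (by
        refine hg.comp (t := polydisk (d+1) ρ₂) ?_ ?_
        · refine Differentiable.differentiableOn ?_
          rw [differentiable_pi]
          intro j
          refine Fin.cases ?_ (fun j => ?_) j
          · simp
          · simpa using differentiable_apply j
        · intro y hy j
          refine Fin.cases ?_ (fun j => ?_) j
          · simpa using hζ'
          · simpa using hy j) (Fin.tail x) hx'
      rw [← h1, smul_eq_mul, ← torusIntegral_const_mul]
      congr 1
      funext y
      rw [Fin.prod_univ_succ]
      simp [Fin.tail, mul_assoc]
    have hc : (∮ z in C((0 : Fin (d+1) → ℂ) 0, ρ), torusIntegral (fun y : Fin d → ℂ =>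
          (∏ j, ((Fin.cons z y : Fin (d+1) → ℂ) j - x j)⁻¹) *
          g (Fin.cons z y)) ((0 : Fin (d+1) → ℂ) ∘ Fin.succ) ((fun _ => ρ) ∘ Fin.succ)) =
        ∮ z in C(0, ρ), (z - x 0)⁻¹ • ((2 * Real.pi * I) ^ d * g (Fin.cons z (Fin.tail x))) :=
      circleIntegral.integral_congr hρ.le hstep
    rw [hc]
    have hdiff : DiffContOnCl ℂ
        (fun z : ℂ => (2 * Real.pi * I) ^ d * g (Fin.cons z (Fin.tail x))) (Metric.ball 0 ρ) := by
      have h2 : DifferentiableOn ℂ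
          (fun z : ℂ => (2 * Real.pi * I) ^ d * g (Fin.cons z (Fin.tail x)))
          (Metric.closedBall 0 ρ) := by
        refine DifferentiableOn.const_mul ?_ _
        refine hg.comp (t := polydisk (d+1) ρ₂) ?_ ?_
        · refine Differentiable.differentiableOn ?_
          rw [differentiable_pi]
          intro j
          refine Fin.cases ?_ (fun j => ?_) j
          · simp
          · simp
        · intro y hy j
          refine Fin.cases ?_ (fun j => ?_) j
          · simpa using (mem_closedBall_zero_iff.1 hy).trans_lt hρ₂
          · simpa using (hx' j).trans hρ₂
      refine DifferentiableOn.diffContOnCl ?_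
      rw [closure_ball _ hρ.ne']
      exact h2
    rw [hdiff.circleIntegral_sub_inv_smul (by simpa using hx 0)]
    rw [smul_eq_mul, ← mul_assoc, Fin.cons_self_tail x, pow_succ']

lemma expand_torus {d : ℕ} {ρ : ℝ} (hρ : 0 < ρ) {x ζ : Fin d → ℂ} (hx : ∀ j, ‖x j‖ < ρ)
    (hζ : ∀ j, ‖ζ j‖ = ρ) :
    HasSum (fun β : MI d => ∏ j, ((ζ j)⁻¹ * (x j * (ζ j)⁻¹) ^ β j)) (∏ j, (ζ j - x j)⁻¹) ∧
    ∀ β : MI d, ‖∏ j, ((ζ j)⁻¹ * (x j * (ζ j)⁻¹) ^ β j)‖ =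
      ‖∏ j, (((ρ : ℂ))⁻¹ * ((‖x j‖ : ℂ) * (ρ : ℂ)⁻¹) ^ β j)‖ := by
  have hlt : ∀ j, ‖x j * (ζ j)⁻¹‖ < 1 := by
    intro j
    rw [norm_mul, norm_inv, hζ, ← div_eq_mul_inv, div_lt_one hρ]
    exact hx j
  have h := (hasSum_pi_prod d (fun j k => (ζ j)⁻¹ * (x j * (ζ j)⁻¹) ^ k) (fun j => by
    simp only [norm_mul (ζ j)⁻¹, norm_pow]
    exact (summable_geometric_of_lt_one (norm_nonneg _) (hlt j)).mul_left _)).1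
  constructor
  · convert h using 1
    refine Finset.prod_congr rfl fun j _ => ?_
    rw [tsum_mul_left, tsum_geometric_of_norm_lt_one (hlt j), ← mul_inv]
    congr 1
    have : ζ j ≠ 0 := by
      intro h0; have := hζ j; rw [h0, norm_zero] at this; exact hρ.ne this
    field_simp
  · intro β
    simp only [norm_prod, norm_mul, norm_inv, norm_pow, hζ, Complex.norm_real, norm_norm,
      Real.norm_of_nonneg hρ.le]

lemma bound_torus_summ {d : ℕ} {ρ : ℝ} (hρ : 0 < ρ) {x : Fin d → ℂ} (hx : ∀ j, ‖x j‖ < ρ) :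
    Summable fun β : MI d => ‖∏ j, (((ρ : ℂ))⁻¹ * ((‖x j‖ : ℂ) * (ρ : ℂ)⁻¹) ^ β j)‖ := by
  refine (hasSum_pi_prod d (fun j k => (ρ : ℂ)⁻¹ * ((‖x j‖ : ℂ) * (ρ : ℂ)⁻¹) ^ k) (fun j => ?_)).2
  simp only [norm_mul (ρ : ℂ)⁻¹, norm_pow]
  refine (summable_geometric_of_lt_one (norm_nonneg _) ?_).mul_left _
  rw [norm_mul, norm_inv, Complex.norm_real, Complex.norm_real, norm_norm,
    Real.norm_of_nonneg hρ.le, ← div_eq_mul_inv, div_lt_one hρ]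
  exact hx j

/-- Holomorphic functions have power series expansions on polydisks. -/
lemma exists_HS {d : ℕ} {ρ ρ₂ : ℝ} (hρ : 0 < ρ) (hρ₂ : ρ < ρ₂) {g : (Fin d → ℂ) → ℂ}
    (hg : DifferentiableOn ℂ g (polydisk d ρ₂)) : ∃ c, HS (fun _ => ρ) g c := by
  set τ : (Fin d → ℝ) → Fin d → ℂ := torusMap (0 : Fin d → ℂ) (fun _ => ρ) with hτ
  have hpi : (2 * Real.pi * I : ℂ) ^ d ≠ 0 := pow_ne_zero _ (by simp [Real.pi_ne_zero])
  set μ := (volume : Measure (Fin d → ℝ)).restrict (Icc (0 : Fin d → ℝ) fun _ => 2 * Real.pi)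
    with hμ
  have hfin : IsFiniteMeasure μ := ⟨by
    rw [hμ, Measure.restrict_apply_univ]; exact isCompact_Icc.measure_lt_top⟩
  set J : (Fin d → ℝ) → ℂ := fun θ => (∏ i, (ρ : ℂ) * exp (θ i * I) * I) * g (τ θ) with hJ
  have hgc : Continuous fun θ => g (τ θ) := cont_comp_torus hρ hρ₂ hg.continuousOn
  have hJc : Continuous J := by
    refine Continuous.mul ?_ hgc
    fun_prop
  obtain ⟨M, hM⟩ : ∃ M, ∀ θ ∈ Icc (0 : Fin d → ℝ) (fun _ => 2 * Real.pi), ‖J θ‖ ≤ M :=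
    isCompact_Icc.exists_bound_of_continuousOn hJc.continuousOn
  have hτne : ∀ θ j, τ θ j ≠ 0 := by
    intro θ j h0
    have := norm_torusMap hρ θ j
    rw [← hτ, h0, norm_zero] at this
    exact hρ.ne this
  have hτc : Continuous τ := continuous_torusMap' ρ
  refine ⟨fun β => ((2 * Real.pi * I : ℂ) ^ d)⁻¹ *
    ∫ θ, J θ * ∏ j, ((τ θ j)⁻¹ * ((τ θ j)⁻¹) ^ β j) ∂μ, ?_⟩
  intro x hx
  have hC := cauchy_torus hρ hρ₂ d g hg x hx
  have key : HasSum (fun β : MI d => ∫ θ, J θ * ∏ j, ((τ θ j)⁻¹ * (x j * (τ θ j)⁻¹) ^ β j) ∂μ)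
      (∫ θ, J θ * ∏ j, (τ θ j - x j)⁻¹ ∂μ) := by
    refine hasSum_integral_of_dominated_convergence
      (fun β _ => M * ‖∏ j, (((ρ : ℂ))⁻¹ * ((‖x j‖ : ℂ) * (ρ : ℂ)⁻¹) ^ β j)‖) ?_ ?_ ?_ ?_ ?_
    · intro β
      refine Continuous.aestronglyMeasurable (hJc.mul ?_)
      refine continuous_finsetProd _ fun j _ => ?_
      have hinv : Continuous fun θ => (τ θ j)⁻¹ :=
        ((continuous_apply j).comp hτc).inv₀ (fun θ => hτne θ j)
      exact hinv.mul ((continuous_const.mul hinv).pow _)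
    · intro β
      rw [hμ]
      filter_upwards [ae_restrict_mem measurableSet_Icc] with θ hθ
      rw [norm_mul, (expand_torus hρ hx (fun j => norm_torusMap hρ θ j)).2 β]
      exact mul_le_mul_of_nonneg_right (hM θ hθ) (norm_nonneg _)
    · exact Filter.Eventually.of_forall fun θ => (bound_torus_summ hρ hx).mul_left M
    · exact integrable_const _
    · exact Filter.Eventually.of_forall fun θ =>
        (expand_torus hρ hx (fun j => norm_torusMap hρ θ j)).1.mul_left _
  have h1 : (∫ θ, J θ * ∏ j, (τ θ j - x j)⁻¹ ∂μ) = (2 * Real.pi * I) ^ d * g x := by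
    rw [← hC, torusIntegral]
    refine integral_congr_ae (Filter.Eventually.of_forall fun θ => ?_)
    simp only [hJ, smul_eq_mul, hτ]
    ring
  rw [h1] at key
  have h2 := key.mul_left (((2 * Real.pi * I : ℂ) ^ d)⁻¹)
  rw [inv_mul_cancel_left₀ hpi] at h2
  refine h2.congr_fun' fun β => ?_
  rw [mul_assoc, ← integral_mul_const]
  congr 2
  funext θ
  rw [mul_assoc]
  congr 1
  unfold mono
  rw [← Finset.prod_mul_distrib]
  refine Finset.prod_congr rfl fun j _ => ?_
  rw [mul_pow]; ring

end PA

namespace PA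
open scoped Classical
open Filter Topology Metric

def inSec (θ₁ θ₂ : ℝ) (w : ℂ) : Prop :=
  w ≠ 0 ∧ ∃ θ ∈ Ioo θ₁ θ₂, w = (‖w‖ : ℂ) * exp (θ * I)

lemma sec_freq {θ₁ θ₂ : ℝ} (hθ : θ₁ < θ₂) {ψ : ℂ → ℂ} {t₀ : ℂ} (hψ : AnalyticAt ℂ ψ t₀)
    (h0 : ψ t₀ = 0) (hne : ¬ ∀ᶠ t in 𝓝 t₀, ψ t = 0) :
    ∃ᶠ t in 𝓝[≠] t₀, inSec θ₁ θ₂ (ψ t) := by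
  obtain ⟨n, g, hg, hg0, hev⟩ := hψ.exists_eventuallyEq_pow_smul_nonzero_iff.2 hne
  have hn : n ≠ 0 := by
    rintro rfl
    have := hev.self_of_nhds
    simp [h0] at this
    exact hg0 this.symm
  set θ : ℝ := (θ₁ + θ₂) / 2 with hθdef
  set A : ℝ := arg (g t₀) with hA
  set τ : ℝ := (θ - A) / n with hτ
  set c : ℝ → ℂ := fun s => t₀ + s * exp (τ * I) with hc
  have hcc : Continuous c := by fun_prop
  have hc0 : Tendsto c (𝓝[>] 0) (𝓝 t₀) := by
    have := hcc.tendsto 0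
    simp only [hc, ofReal_zero, zero_mul, add_zero] at this
    exact this.mono_left nhdsWithin_le_nhds
  have hc1 : Tendsto c (𝓝[>] 0) (𝓝[≠] t₀) := by
    refine tendsto_nhdsWithin_iff.2 ⟨hc0, ?_⟩
    filter_upwards [self_mem_nhdsWithin] with s hs
    have hs : (0:ℝ) < s := hs
    simp [hc, hs.ne', exp_ne_zero]
  refine hc1.frequently ?_
  refine Eventually.frequently ?_
  have hw : Tendsto (fun s => g (c s) * exp (-(A * I))) (𝓝[>] 0) (𝓝 (‖g t₀‖ : ℂ)) := by
    have h1 : Tendsto (fun s => g (c s) * exp (-(A * I))) (𝓝[>] 0)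
        (𝓝 (g t₀ * exp (-(A * I)))) := ((hg.continuousAt.tendsto).comp hc0).mul_const _
    have h2 : g t₀ * exp (-(A * I)) = (‖g t₀‖ : ℂ) := by
      conv_lhs => rw [← norm_mul_exp_arg_mul_I (g t₀)]
      rw [mul_assoc, ← exp_add, ← hA, add_neg_cancel, exp_zero, mul_one]
    rwa [h2] at h1
  have hpos : 0 < ‖g t₀‖ := norm_pos_iff.2 hg0
  have harg : Tendsto (fun s => arg (g (c s) * exp (-(A * I)))) (𝓝[>] 0) (𝓝 0) := by
    have h1 : ContinuousAt arg (‖g t₀‖ : ℂ) := continuousAt_arg (by simp [hpos])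
    have h2 := h1.tendsto.comp hw
    rwa [arg_ofReal_of_nonneg hpos.le] at h2
  have hlt : ∀ᶠ s in 𝓝[>] (0:ℝ), arg (g (c s) * exp (-(A * I))) ∈ Ioo (θ₁ - θ) (θ₂ - θ) :=
    harg.eventually (Ioo_mem_nhds (by linarith) (by linarith))
  have hgn : ∀ᶠ s in 𝓝[>] (0:ℝ), g (c s) ≠ 0 :=
    ((hg.continuousAt.tendsto).comp hc0).eventually (isOpen_ne.mem_nhds hg0)
  filter_upwards [hlt, hgn, hc0.eventually hev, self_mem_nhdsWithin] with s hs1 hs2 hs3 hs4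
  have hs4 : (0:ℝ) < s := hs4
  have hs4' : (s : ℂ) ≠ 0 := by exact_mod_cast hs4.ne'
  set w := g (c s) * exp (-(A * I)) with hwdef
  have hgw : g (c s) = w * exp (A * I) := by
    rw [hwdef, mul_assoc, ← exp_add, neg_add_cancel, exp_zero, mul_one]
  have hval : ψ (c s) = (s : ℂ) ^ n * (exp (θ * I) * w) := by
    rw [hs3, hgw, smul_eq_mul]
    have : c s - t₀ = s * exp (τ * I) := by simp [hc]
    rw [this, mul_pow, ← exp_nat_mul]
    have h3 : (n : ℂ) * (τ * I) = (θ - A) * I := by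
      rw [hτ]; push_cast; field_simp
    rw [h3, sub_mul, exp_sub]
    field_simp [exp_ne_zero]
  have hnorm : ‖ψ (c s)‖ = s ^ n * ‖w‖ := by
    rw [hval, norm_mul, norm_mul, norm_exp_ofReal_mul_I, norm_pow, norm_real, Real.norm_eq_abs,
      abs_of_pos hs4, one_mul]
  refine ⟨?_, θ + arg w, ⟨by linarith [hs1.1], by linarith [hs1.2]⟩, ?_⟩
  · rw [hs3]
    refine smul_ne_zero (pow_ne_zero _ ?_) hs2
    simp [hc, hs4.ne', exp_ne_zero]
  · rw [hnorm, hval]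
    conv_lhs => rw [← norm_mul_exp_arg_mul_I w]
    push_cast
    rw [add_mul, exp_add]
    ring

lemma slice {θ₁ θ₂ : ℝ} (hθ : θ₁ < θ₂) {φ ψ : ℂ → ℂ} {ε ε' : ℝ} (hε : 0 < ε) (hεε : ε < ε')
    (hφ : AnalyticOnNhd ℂ φ (ball 0 ε')) (hψ : AnalyticOnNhd ℂ ψ (ball 0 ε'))
    (hne : ∀ t, ‖t‖ = ε → ψ t ≠ 0) (n : ℕ) (C : ℝ)
    (hb : ∀ t₀ ∈ ball (0:ℂ) ε', ∀ᶠ t in 𝓝[≠] t₀, inSec θ₁ θ₂ (ψ t) → ‖φ t‖ ≤ C * ‖ψ t‖ ^ n) :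
    Real.circleAverage (fun t => φ t / ψ t ^ n) 0 ε * ψ 0 ^ n = φ 0 := by
  set U := ball (0:ℂ) ε' with hU
  set F : ℂ → ℂ := fun t => φ t / ψ t ^ n with hF
  have hmer : MeromorphicOn F U := fun t ht =>
    (hφ t ht).meromorphicAt.div ((hψ t ht).meromorphicAt.pow n)
  have hnz : ∀ t₀ ∈ U, ¬ ∀ᶠ t in 𝓝 t₀, ψ t = 0 := by
    intro t₀ ht₀ hev
    have := hψ.eqOn_zero_of_preconnected_of_eventuallyEq_zero
      (convex_ball (0:ℂ) ε').isPreconnected ht₀ hev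
    refine hne (ε : ℂ) (by simp [abs_of_pos hε]) (this ?_)
    simp [hU, abs_of_pos hε, hεε]
  have hord : ∀ t₀ ∈ U, 0 ≤ meromorphicOrderAt F t₀ := by
    intro t₀ ht₀
    by_cases h0 : ψ t₀ = 0
    · by_contra hlt
      push Not at hlt
      have htend := tendsto_cobounded_of_meromorphicOrderAt_neg hlt
      rw [← tendsto_norm_atTop_iff_cobounded] at htend
      have h1 := htend.eventually (eventually_gt_atTop C)
      obtain ⟨t, hs, hbt, hct⟩ := ((sec_freq hθ (hψ t₀ ht₀) h0 (hnz t₀ ht₀)).and_eventually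
        ((hb t₀ ht₀).and h1)).exists
      have h2 := hbt hs
      have h3 : 0 < ‖ψ t‖ ^ n := pow_pos (norm_pos_iff.2 hs.1) _
      have : ‖F t‖ ≤ C := by
        rw [hF]; simp only [norm_div, norm_pow]
        rwa [div_le_iff₀ h3]
      linarith
    · have : AnalyticAt ℂ F t₀ := (hφ t₀ ht₀).div ((hψ t₀ ht₀).pow n) (pow_ne_zero _ h0)
      exact this.meromorphicOrderAt_nonneg
  set N := toMeromorphicNFOn F U with hN
  have hNan : ∀ t ∈ U, AnalyticAt ℂ N t := by
    intro t ht
    have h1 : MeromorphicNFAt N t := meromorphicNFOn_toMeromorphicNFOn F U ht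
    rw [← h1.meromorphicOrderAt_nonneg_iff_analyticAt]
    rw [hN, meromorphicOrderAt_toMeromorphicNFOn hmer ht]
    exact hord t ht
  have heq : ∀ t₀ ∈ U, N t₀ * ψ t₀ ^ n = φ t₀ := by
    intro t₀ ht₀
    have h1 := hmer.toMeromorphicNFOn_eq_self_on_nhdsNE ht₀
    have h2 : ∀ᶠ t in 𝓝[≠] t₀, ψ t ≠ 0 :=
      ((hψ t₀ ht₀).eventually_eq_zero_or_eventually_ne_zero).resolve_left (hnz t₀ ht₀)
    have h3 : (fun t => N t * ψ t ^ n) =ᶠ[𝓝[≠] t₀] φ := by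
      filter_upwards [h1, h2] with t ht1 ht2
      rw [← hN] at ht1
      rw [ht1, hF]
      exact div_mul_cancel₀ _ (pow_ne_zero _ ht2)
    have h4 : Tendsto (fun t => N t * ψ t ^ n) (𝓝[≠] t₀) (𝓝 (N t₀ * ψ t₀ ^ n)) :=
      (((hNan t₀ ht₀).mul ((hψ t₀ ht₀).pow n)).continuousAt.tendsto).mono_left nhdsWithin_le_nhds
    have h5 : Tendsto φ (𝓝[≠] t₀) (𝓝 (φ t₀)) :=
      ((hφ t₀ ht₀).continuousAt.tendsto).mono_left nhdsWithin_le_nhds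
    exact tendsto_nhds_unique (h4.congr' h3) h5
  have hsub : closedBall (0:ℂ) |ε| ⊆ U := by
    rw [abs_of_pos hε]; exact closedBall_subset_ball hεε
  have hmean : Real.circleAverage N 0 ε = N 0 := by
    refine circleAverage_of_differentiable_on_off_countable (s := ∅) countable_empty ?_ ?_
    · exact fun t ht => (hNan t (hsub ht)).continuousAt.continuousWithinAt
    · exact fun t ht => (hNan t (hsub (ball_subset_closedBall ht.1))).differentiableAt
  have hFN : Real.circleAverage F 0 ε = Real.circleAverage N 0 ε := by
    refine Real.circleAverage_congr_sphere fun t ht => ?_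
    have htn : ‖t‖ = ε := by simpa [abs_of_pos hε] using ht
    have htU : t ∈ U := hsub (sphere_subset_closedBall ht)
    rw [hF]
    simp only
    rw [← heq t htU, mul_div_cancel_right₀ _ (pow_ne_zero _ (hne t htn))]
  rw [hFN, hmean]
  exact heq 0 (by simpa [hU] using hε.trans hεε)

end PA

namespace PA
open scoped Classical
open Filter Topology Metric

lemma polydisk_eq_ball {d : ℕ} {r : ℝ} (hr : 0 < r) : polydisk d r = ball 0 r := by
  ext x
  simp only [polydisk, Set.mem_ofPred_eq, mem_ball_zero_iff]
  exact (pi_norm_lt_iff hr).symm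

lemma geom {d : ℕ} {R r0 : ℝ} (hr0 : 0 < r0) (hr0R : r0 ≤ R) {P : (Fin d → ℂ) → ℂ}
    (hP : AnalyticOnNhd ℂ P (ball 0 R)) (hPne : ∃ x ∈ ball 0 R, P x ≠ 0) :
    ∃ v : Fin d → ℂ, ∃ ε ρ : ℝ, (∀ j, v j ≠ 0) ∧ 0 < ε ∧ 0 < ρ ∧ ρ ≤ r0 ∧
      (∀ x ∈ ball (0 : Fin d → ℂ) ρ, (∀ t : ℂ, ‖t‖ = ε → P (x + t • v) ≠ 0) ∧
        (∀ t : ℂ, ‖t‖ < 2 * ε → x + t • v ∈ ball (0 : Fin d → ℂ) r0)) := by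
  have hopen : ∀ r ≤ R, IsOpen (ball (0 : Fin d → ℂ) r ∩ {x | P x ≠ 0}) := by
    intro r hr
    have hc : ContinuousOn P (ball 0 r) := fun x hx =>
      (hP x (ball_subset_ball hr hx)).continuousAt.continuousWithinAt
    exact hc.isOpen_inter_preimage isOpen_ball isOpen_ne
  obtain ⟨v, hv, hvne⟩ : ((ball (0 : Fin d → ℂ) R ∩ {x | P x ≠ 0}) ∩
      (univ.pi fun _ : Fin d => ({0}ᶜ : Set ℂ))).Nonempty := by
    refine (dense_pi univ fun i _ => dense_compl_singleton (0:ℂ)).inter_open_nonempty _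
      (hopen R le_rfl) ?_
    obtain ⟨x, hx, hxn⟩ := hPne
    exact ⟨x, hx, hxn⟩
  have hvne : ∀ j, v j ≠ 0 := fun j => hvne j (mem_univ j)
  set S : Set ℂ := (fun t : ℂ => t • v) ⁻¹' ball 0 R with hS
  have hSc : Convex ℝ S := by
    have : Convex ℝ (ball (0 : Fin d → ℂ) R) := convex_ball _ _
    exact this.is_linear_preimage
      ((ContinuousLinearMap.toSpanSingleton ℂ v).restrictScalars ℝ).isLinear
  have hQ : AnalyticOnNhd ℂ (fun t : ℂ => P (t • v)) S := by
    intro t ht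
    have h1 : AnalyticAt ℂ (fun t : ℂ => t • v) t := by fun_prop
    exact AnalyticAt.fun_comp (f := fun t : ℂ => t • v) (g := P) (hP _ ht) h1
  have h0S : (0:ℂ) ∈ S := by
    simp only [hS, Set.mem_preimage, zero_smul]
    exact mem_ball_self (hr0.trans_le hr0R)
  have hev : ∀ᶠ t in 𝓝[≠] (0:ℂ), P (t • v) ≠ 0 := by
    refine (hQ 0 h0S).eventually_eq_zero_or_eventually_ne_zero.resolve_left fun h => ?_
    have h2 := hQ.eqOn_zero_of_preconnected_of_eventuallyEq_zero hSc.isPreconnected h0S h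
    have h1S : (1:ℂ) ∈ S := by simpa [hS] using hv.1
    have := h2 h1S
    simp at this
    exact hv.2 this
  rw [eventually_nhdsWithin_iff, Metric.eventually_nhds_iff] at hev
  obtain ⟨η, hη, hev⟩ := hev
  have hvpos : 0 < ‖v‖ + 1 := by positivity
  set ε := min (η / 2) (r0 / (4 * (‖v‖ + 1))) with hε
  have hεpos : 0 < ε := by positivity
  have hεv : 2 * ε * ‖v‖ ≤ r0 / 2 := by
    have h1 : ε ≤ r0 / (4 * (‖v‖ + 1)) := min_le_right _ _
    rw [le_div_iff₀ (by positivity)] at h1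
    nlinarith
  have hin : ∀ x ∈ ball (0 : Fin d → ℂ) (r0 / 2), ∀ t : ℂ, ‖t‖ < 2 * ε →
      x + t • v ∈ ball (0 : Fin d → ℂ) r0 := by
    intro x hx t ht
    rw [mem_ball_zero_iff] at hx ⊢
    calc ‖x + t • v‖ ≤ ‖x‖ + ‖t • v‖ := norm_add_le _ _
      _ = ‖x‖ + ‖t‖ * ‖v‖ := by rw [norm_smul]
      _ ≤ ‖x‖ + 2 * ε * ‖v‖ := by gcongr
      _ < r0 := by linarith
  have hK : IsCompact ((fun t : ℂ => t • v) '' sphere 0 ε) :=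
    (isCompact_sphere _ _).image (by fun_prop)
  obtain ⟨δ, hδ, hsub⟩ := hK.exists_thickening_subset_open (hopen r0 hr0R) (by
    rintro _ ⟨t, ht, rfl⟩
    have htn : ‖t‖ = ε := by simpa using ht
    refine ⟨?_, ?_⟩
    · have := hin 0 (mem_ball_self (by positivity)) t (by linarith)
      simpa using this
    · refine hev ?_ ?_
      · rw [dist_zero_right, htn]
        have : ε ≤ η / 2 := min_le_left _ _
        linarith
      · intro h
        rw [h, norm_zero] at htn
        exact hεpos.ne htn)
  refine ⟨v, ε, min δ (r0 / 2), hvne, hεpos, by positivity,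
    (min_le_right _ _).trans (by linarith), fun x hx => ⟨fun t ht => ?_, ?_⟩⟩
  · refine (hsub (mem_thickening_iff.2 ⟨t • v, ⟨t, by simpa using ht, rfl⟩, ?_⟩)).2
    rw [dist_eq_norm, add_sub_cancel_right]
    exact (mem_ball_zero_iff.1 hx).trans_le (min_le_left _ _)
  · exact hin x (ball_subset_ball (min_le_right _ _) hx)

lemma diff_param {d : ℕ} {W : Set (Fin d → ℂ)} (hW : IsOpen W) {K : (Fin d → ℂ) → ℂ}
    (hK : AnalyticOnNhd ℂ K W) {c : ℝ → Fin d → ℂ} (hc : Continuous c) {ρ : ℝ}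
    (hin : ∀ x ∈ ball (0 : Fin d → ℂ) ρ, ∀ θ, x + c θ ∈ W) (b : ℝ) :
    DifferentiableOn ℂ (fun x => ∫ θ in (0:ℝ)..b, K (x + c θ)) (ball 0 ρ) := by
  intro x₀ hx₀
  obtain ⟨δ, hδ, hsub⟩ := Metric.nhds_basis_closedBall.mem_iff.1 (isOpen_ball.mem_nhds hx₀)
  have hKc : ContinuousOn K W := hK.continuousOn
  have hfc : ContinuousOn (fderiv ℂ K) W := hK.fderiv.continuousOn
  have hcx : ∀ x ∈ ball (0 : Fin d → ℂ) ρ, Continuous fun θ => K (x + c θ) := fun x hx =>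
    hKc.comp_continuous (by fun_prop) (hin x hx)
  have hfx : Continuous fun θ => fderiv ℂ K (x₀ + c θ) :=
    hfc.comp_continuous (by fun_prop) (hin x₀ hx₀)
  have hcomp : IsCompact (closedBall x₀ δ ×ˢ uIcc (0:ℝ) b) :=
    (isCompact_closedBall _ _).prod isCompact_uIcc
  obtain ⟨M, hM⟩ := hcomp.exists_bound_of_continuousOn
    (f := fun q : (Fin d → ℂ) × ℝ => fderiv ℂ K (q.1 + c q.2)) (by
      refine hfc.comp (by fun_prop) ?_
      rintro ⟨x, θ⟩ hq
      exact hin x (hsub hq.1) θ)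
  refine (intervalIntegral.hasFDerivAt_integral_of_dominated_of_fderiv_le (𝕜 := ℂ)
    (F := fun x θ => K (x + c θ)) (F' := fun x θ => fderiv ℂ K (x + c θ))
    (bound := fun _ => M) (closedBall_mem_nhds x₀ hδ) ?_ ?_ ?_ ?_ ?_
    ?_).differentiableAt.differentiableWithinAt
  · filter_upwards [isOpen_ball.mem_nhds hx₀] with x hx
    exact (hcx x hx).aestronglyMeasurable
  · exact (hcx x₀ hx₀).intervalIntegrable _ _
  · exact hfx.aestronglyMeasurable
  · refine Eventually.of_forall fun θ hθ x hx => ?_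
    exact hM (x, θ) ⟨hx, uIoc_subset_uIcc hθ⟩
  · exact intervalIntegrable_const
  · refine Eventually.of_forall fun θ hθ x hx => ?_
    have h1 : HasFDerivAt K (fderiv ℂ K (x + c θ)) (x + c θ) :=
      (hK _ (hin x (hsub hx) θ)).differentiableAt.hasFDerivAt
    have h2 : HasFDerivAt (fun y : Fin d → ℂ => y + c θ) (ContinuousLinearMap.id ℂ _) x :=
      (hasFDerivAt_id x).add_const (c θ)
    exact h1.comp x h2

lemma nhdsNE_ne (t₀ b : ℂ) : ∀ᶠ t in 𝓝[≠] t₀, t ≠ b := by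
  by_cases h : t₀ = b
  · subst h; exact self_mem_nhdsWithin
  · exact (eventually_ne_nhds h).filter_mono nhdsWithin_le_nhds

lemma exists_u {d : ℕ} {R : ℝ} (hR : 0 < R)
    {P : (Fin d → ℂ) → ℂ} (hP : AnalyticOnNhd ℂ P (polydisk d R))
    (hPne : ∃ x ∈ polydisk d R, P x ≠ 0)
    {θ₁ θ₂ : ℝ} (hθ : θ₁ < θ₂) {f : (Fin d → ℂ) → ℂ}
    {ρ₁ : ℝ} (hρ₁ : 0 < ρ₁) {fseq : ℕ → (Fin d → ℂ) → ℂ}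
    (hfseqA : ∀ n, AnalyticOnNhd ℂ (fseq n) (polydisk d ρ₁))
    {Kseq : ℕ → ℝ} (hKseq : ∀ n, 0 < Kseq n)
    (hest : ∀ n, ∀ x ∈ PSector d P θ₁ θ₂ R ∩ polydisk d ρ₁,
      ‖f x - fseq n x‖ ≤ Kseq n * ‖P x‖ ^ n) :
    ∃ ρ > 0, ρ ≤ R ∧ ρ ≤ ρ₁ ∧ ∃ u : ℕ → (Fin d → ℂ) → ℂ,
      (∀ n, DifferentiableOn ℂ (u n) (polydisk d ρ)) ∧
      ∀ n, ∀ x ∈ polydisk d ρ, fseq (n + 1) x - fseq n x = u n x * P x ^ n := by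
  set r0 := min R ρ₁ / 2 with hr0
  have hr0pos : 0 < r0 := by positivity
  have hr0R : r0 < R := by
    have := min_le_left R ρ₁
    have : 0 < min R ρ₁ := by positivity
    linarith
  have hr0ρ : r0 < ρ₁ := by
    have := min_le_right R ρ₁
    have : 0 < min R ρ₁ := by positivity
    linarith
  have hSec : ∀ y ∈ ball (0 : Fin d → ℂ) r0, (∀ j, y j ≠ 0) → inSec θ₁ θ₂ (P y) →
      y ∈ PSector d P θ₁ θ₂ R ∩ polydisk d ρ₁ := by
    intro y hy hyn hs
    rw [← polydisk_eq_ball hr0pos] at hy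
    exact ⟨⟨fun j => ⟨norm_pos_iff.2 (hyn j), (hy j).trans hr0R⟩, hs.1, hs.2⟩,
      fun j => (hy j).trans hr0ρ⟩
  rw [polydisk_eq_ball hR] at hP hPne
  rw [polydisk_eq_ball hρ₁] at hfseqA
  obtain ⟨v, ε, ρ, hv, hε, hρ, hρr, hgeo⟩ := geom hr0pos hr0R.le hP hPne
  obtain ⟨M, hM⟩ := (isCompact_closedBall (0 : Fin d → ℂ) r0).exists_bound_of_continuousOn
    (f := P) (fun x hx => (hP x (closedBall_subset_ball hr0R hx)).continuousAt.continuousWithinAt)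
  refine ⟨ρ, hρ, by linarith, by linarith, fun n x => Real.circleAverage
    (fun t => (fseq (n + 1) (x + t • v) - fseq n (x + t • v)) / P (x + t • v) ^ n) 0 ε, ?_, ?_⟩
  · intro n
    rw [polydisk_eq_ball hρ]
    have hWo : IsOpen (ball (0 : Fin d → ℂ) r0 ∩ {x | P x ≠ 0}) := by
      have hc : ContinuousOn P (ball 0 r0) := fun x hx =>
        (hP x (ball_subset_ball hr0R.le hx)).continuousAt.continuousWithinAt
      exact hc.isOpen_inter_preimage isOpen_ball isOpen_ne
    have hKan : AnalyticOnNhd ℂ (fun y => (fseq (n + 1) y - fseq n y) / P y ^ n)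
        (ball (0 : Fin d → ℂ) r0 ∩ {x | P x ≠ 0}) := by
      intro y hy
      have h1 := ball_subset_ball hr0ρ.le hy.1
      exact ((hfseqA (n + 1) y h1).sub (hfseqA n y h1)).div
        ((hP y (ball_subset_ball hr0R.le hy.1)).pow n) (pow_ne_zero _ hy.2)
    have := diff_param hWo hKan (c := fun θ => circleMap 0 ε θ • v) (by fun_prop) (ρ := ρ) (by
      intro x hx θ
      have hn : ‖circleMap 0 ε θ‖ = ε := by simp [abs_of_pos hε]
      exact ⟨(hgeo x hx).2 _ (by rw [hn]; linarith), (hgeo x hx).1 _ hn⟩) (2 * Real.pi)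
    exact this.const_smul ((2 * Real.pi)⁻¹ : ℝ)
  · intro n x hx
    rw [polydisk_eq_ball hρ] at hx
    have hlin : ∀ t : ℂ, AnalyticAt ℂ (fun t : ℂ => x + t • v) t := fun t => by fun_prop
    have hmem : ∀ t ∈ ball (0:ℂ) (2 * ε), x + t • v ∈ ball (0 : Fin d → ℂ) r0 := fun t ht =>
      (hgeo x hx).2 t (by simpa using ht)
    have := slice hθ hε (ε' := 2 * ε) (by linarith)
      (φ := fun t => fseq (n + 1) (x + t • v) - fseq n (x + t • v))
      (ψ := fun t => P (x + t • v)) (fun t ht => ?_) (fun t ht => ?_) (hgeo x hx).1 n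
      (Kseq n + Kseq (n + 1) * M) ?_
    · simp only [zero_smul, add_zero] at this
      exact this.symm
    · have h1 := ball_subset_ball hr0ρ.le (hmem t ht)
      exact (AnalyticAt.fun_comp (f := fun t : ℂ => x + t • v) (hfseqA (n + 1) _ h1) (hlin t)).fun_sub
        (AnalyticAt.fun_comp (f := fun t : ℂ => x + t • v) (hfseqA n _ h1) (hlin t))
    · exact AnalyticAt.fun_comp (f := fun t : ℂ => x + t • v) (hP _ (ball_subset_ball hr0R.le (hmem t ht))) (hlin t)
    · intro t₀ ht₀
      have h1 : ∀ᶠ t in 𝓝[≠] t₀, t ∈ ball (0:ℂ) (2 * ε) :=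
        nhdsWithin_le_nhds (isOpen_ball.mem_nhds ht₀)
      have h2 : ∀ᶠ t in 𝓝[≠] t₀, ∀ j, t ≠ - x j / v j :=
        eventually_all.2 fun j => nhdsNE_ne _ _
      filter_upwards [h1, h2] with t ht1 ht2 hs
      have hy := hmem t ht1
      have hsec := hSec _ hy (fun j h0 => ht2 j (by
        simp only [Pi.add_apply, Pi.smul_apply, smul_eq_mul] at h0
        rw [eq_div_iff (hv j)]
        linear_combination h0)) hs
      set y := x + t • v
      have e1 := hest n y hsec
      have e2 := hest (n + 1) y hsec
      have e3 := hM y (ball_subset_closedBall hy)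
      have e4 : Kseq (n + 1) * ‖P y‖ ^ (n + 1) ≤ Kseq (n + 1) * M * ‖P y‖ ^ n := by
        rw [pow_succ, mul_assoc, mul_comm (‖P y‖ ^ n)]
        exact mul_le_mul_of_nonneg_left
          (mul_le_mul_of_nonneg_right e3 (by positivity)) (hKseq _).le
      calc ‖fseq (n + 1) y - fseq n y‖ = ‖(f y - fseq n y) - (f y - fseq (n + 1) y)‖ := by
            congr 1; ring
        _ ≤ ‖f y - fseq n y‖ + ‖f y - fseq (n + 1) y‖ := norm_sub_le _ _
        _ ≤ (Kseq n + Kseq (n + 1) * M) * ‖P y‖ ^ n := by rw [add_mul]; linarith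

end PA

namespace PA
open scoped Classical
open Filter Topology Metric

lemma norm_mono_rpow {d : ℕ} (ℓ : Fin d → ℝ) {σ : ℝ} (hσ : 0 < σ) (α : MI d) :
    ‖mono (fun j => ((σ ^ ℓ j : ℝ) : ℂ)) α‖ = σ ^ (∑ j, ℓ j * (α j : ℝ)) := by
  rw [norm_mono, Real.rpow_sum_of_pos hσ]
  refine Finset.prod_congr rfl fun j _ => ?_
  rw [Complex.norm_real, Real.norm_of_nonneg (by positivity), Real.rpow_mul_natCast hσ.le]

lemma ev_small {d : ℕ} (ℓ : Fin d → ℝ) (hℓ : ∀ j, 0 < ℓ j) {ρ : ℝ} (hρ : 0 < ρ) :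
    ∀ᶠ σ in 𝓝[>] (0:ℝ), ∀ j, σ ^ ℓ j < ρ := by
  refine eventually_all.2 fun j => ?_
  have h : Tendsto (fun σ : ℝ => σ ^ ℓ j) (𝓝[>] 0) (𝓝 0) := by
    have := (Real.continuousAt_rpow_const 0 (ℓ j) (Or.inr (hℓ j).le)).tendsto
    rw [Real.zero_rpow (hℓ j).ne'] at this
    exact this.mono_left nhdsWithin_le_nhds
  exact h.eventually (gt_mem_nhds hρ)

lemma choose_s {d : ℕ} (ℓ : Fin d → ℝ) (hℓ : ∀ j, 0 < ℓ j) {ρ : ℝ} (hρ : 0 < ρ)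
    {P : (Fin d → ℂ) → ℂ} {p : MI d → ℂ} (hp : HS (fun _ => ρ) P p) (a : MI d) (ha : p a ≠ 0)
    (hmin : ∀ β, p β ≠ 0 → β ≠ a → ∑ j, ℓ j * (a j : ℝ) < ∑ j, ℓ j * (β j : ℝ)) :
    ∃ s : Fin d → ℝ, (∀ j, 0 < s j) ∧ (∀ j, s j < ρ) ∧
      ∑' α, ‖(if α = a then 0 else p α * mono (fun j => (s j : ℂ)) α)‖
        < ‖p a * mono (fun j => (s j : ℂ)) a‖ := by
  set L : MI d → ℝ := fun β => ∑ j, ℓ j * (β j : ℝ) with hL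
  obtain ⟨σ₀, hσ₀, hpos₀⟩ := ((ev_small ℓ hℓ hρ).and self_mem_nhdsWithin).exists
  have hpos₀ : (0:ℝ) < σ₀ := hpos₀
  have hsum := hp.summ (t := fun j => σ₀ ^ ℓ j) (fun j => by positivity) hσ₀
  have hsum' : Summable fun α => ‖p α‖ * σ₀ ^ (L α - L a) := by
    have := hsum.mul_right ((σ₀ ^ L a)⁻¹)
    refine this.congr fun α => ?_
    rw [norm_mul, norm_mono_rpow ℓ hpos₀, Real.rpow_sub hpos₀, div_eq_mul_inv, mul_assoc]
  have hlim : Tendsto (fun σ : ℝ => ∑' α, (if α = a then 0 else ‖p α‖ * σ ^ (L α - L a)))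
      (𝓝[>] 0) (𝓝 (∑' _ : MI d, (0:ℝ))) := by
    refine tendsto_tsum_of_dominated_convergence hsum' ?_ ?_
    · intro α
      by_cases h : α = a
      · simp [h]
      · simp only [h, if_false]
        by_cases h0 : p α = 0
        · simp [h0]
        · have hlt : 0 < L α - L a := sub_pos.2 (hmin α h0 h)
          have := (Real.continuousAt_rpow_const 0 (L α - L a) (Or.inr hlt.le)).tendsto
          rw [Real.zero_rpow hlt.ne'] at this
          have h2 : Tendsto (fun x : ℝ => x ^ (L α - L a)) (𝓝[>] 0) (𝓝 0) :=
            this.mono_left nhdsWithin_le_nhds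
          have h3 := h2.const_mul ‖p α‖
          rwa [mul_zero] at h3
    · filter_upwards [self_mem_nhdsWithin, Ioo_mem_nhdsGT hpos₀] with σ hσ hσ2 α
      by_cases h : α = a
      · simp only [h, if_true, norm_zero]; positivity
      · simp only [h, if_false]
        by_cases h0 : p α = 0
        · simp [h0]
        · have hlt : 0 < L α - L a := sub_pos.2 (hmin α h0 h)
          have hσ' : (0:ℝ) < σ := hσ
          rw [Real.norm_of_nonneg (by positivity)]
          exact mul_le_mul_of_nonneg_left (Real.rpow_le_rpow hσ'.le hσ2.2.le hlt.le)
            (norm_nonneg _)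
  rw [tsum_zero] at hlim
  obtain ⟨σ, hσ1, hσ2, hσ3⟩ := ((hlim.eventually (gt_mem_nhds (norm_pos_iff.2 ha))).and
    ((ev_small ℓ hℓ hρ).and self_mem_nhdsWithin)).exists
  have hσ3 : (0:ℝ) < σ := hσ3
  refine ⟨fun j => σ ^ ℓ j, fun j => by positivity, hσ2, ?_⟩
  have key : (fun α => ‖(if α = a then 0 else p α * mono (fun j => ((σ ^ ℓ j : ℝ) : ℂ)) α)‖)
      = fun α => (if α = a then 0 else ‖p α‖ * σ ^ (L α - L a)) * σ ^ L a := by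
    funext α
    by_cases h : α = a
    · simp [h]
    · simp only [h, if_false]
      rw [norm_mul, norm_mono_rpow ℓ hσ3, mul_assoc, ← Real.rpow_add hσ3, sub_add_cancel]
  rw [key, tsum_mul_right, norm_mul, norm_mono_rpow ℓ hσ3]
  exact mul_lt_mul_of_pos_right hσ1 (by positivity)

/-- Rescaled coefficient family. -/
lemma rescale {d : ℕ} {S t : Fin d → ℝ} {g : (Fin d → ℂ) → ℂ} {c : MI d → ℂ} (h : HS S g c)
    (ht0 : ∀ j, 0 ≤ t j) (hts : ∀ j, t j < S j) :
    ∃ C : E1 d, (∀ β, C β = c β * mono (fun j => (t j : ℂ)) β) ∧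
      ∀ z (hz : ∀ j, ‖z j‖ ≤ 1), ev z hz C = g ((fun j => (t j : ℂ)) * z) := by
  refine ⟨E1.mk _ (h.summ ht0 hts), fun β => rfl, fun z hz => ?_⟩
  refine (ev_hasSum z hz _).unique ?_
  refine (h ((fun j => (t j : ℂ)) * z) fun j => ?_).congr_fun' fun β => ?_
  · rw [Pi.mul_apply, norm_mul, Complex.norm_real, Real.norm_of_nonneg (ht0 j)]
    exact (mul_le_of_le_one_right (ht0 j) (hz j)).trans_lt (hts j)
  · rw [E1.mk_apply, mono_mul, mul_assoc]

lemma assemble {d : ℕ} {ρ : ℝ} (hρ : 0 < ρ) {P : (Fin d → ℂ) → ℂ} {p : MI d → ℂ}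
    (hp : HS (fun _ => ρ) P p) (a : MI d) {s : Fin d → ℝ} (hs0 : ∀ j, 0 < s j)
    (hsρ : ∀ j, s j < ρ)
    (hps : ∑' α, ‖(if α = a then 0 else p α * mono (fun j => (s j : ℂ)) α)‖
        < ‖p a * mono (fun j => (s j : ℂ)) a‖)
    {fseq u : ℕ → (Fin d → ℂ) → ℂ} {c0 : MI d → ℂ} (h0 : HS (fun _ => ρ) (fseq 0) c0)
    {c : ℕ → MI d → ℂ} (hu : ∀ n, HS (fun _ => ρ) (u n) (c n))
    (hrec : ∀ n, ∀ x ∈ polydisk d ρ, fseq (n + 1) x - fseq n x = u n x * P x ^ n) :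
    ∃ g : ℕ → (Fin d → ℂ) → ℂ, ∃ B M : ℕ → ℝ,
      (∀ n, AnalyticOnNhd ℂ (g n) {x | ∀ j, ‖x j‖ < s j}) ∧
      (∀ n x, (∀ j, ‖x j‖ < s j) → ‖g n x‖ ≤ M n) ∧
      (∀ n, ∀ β : Fin d → ℕ, (∀ j, a j ≤ β j) → mixedPartial β (g n) 0 = 0) ∧
      (∀ N, 0 ≤ B N) ∧
      (∀ N x, (∀ j, ‖x j‖ < s j) →
        ‖fseq N x - ∑ n ∈ Finset.range N, g n x * P x ^ n‖ ≤ B N * ‖P x‖ ^ N) := by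
  obtain ⟨p', hp', hpev⟩ := rescale hp (fun j => (hs0 j).le) hsρ
  obtain ⟨F0, -, hF0⟩ := rescale h0 (fun j => (hs0 j).le) hsρ
  have := fun n => rescale (hu n) (fun j => (hs0 j).le) hsρ
  choose U hU1 hU using this
  have hdiv : ∑' α, ‖(if α = a then 0 else p' α)‖ < ‖p' a‖ := by
    simp only [hp']; exact hps
  choose q r hr hqr using division p' a hdiv
  set Q : ℕ → E1 d := fun n => Nat.rec F0 (fun n Qn => q (U n + Qn)) n with hQ
  have hQ0 : Q 0 = F0 := rfl
  have hQs : ∀ n, Q (n + 1) = q (U n + Q n) := fun n => rfl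
  set sc : (Fin d → ℂ) → Fin d → ℂ := fun x j => x j * (s j : ℂ)⁻¹ with hsc
  have hscn : ∀ x : Fin d → ℂ, (∀ j, ‖x j‖ < s j) → ∀ j, ‖sc x j‖ ≤ 1 := by
    intro x hx j
    rw [hsc]
    simp only [norm_mul, norm_inv, Complex.norm_real, Real.norm_of_nonneg (hs0 j).le]
    rw [← div_eq_mul_inv, div_le_one (hs0 j)]
    exact (hx j).le
  have hback : ∀ x, (fun j => (s j : ℂ)) * sc x = x := by
    intro x; funext j
    have : (s j : ℂ) ≠ 0 := by exact_mod_cast (hs0 j).ne'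
    simp only [Pi.mul_apply, hsc]
    field_simp
  set g : ℕ → (Fin d → ℂ) → ℂ := fun n x => evf (r (U n + Q n)) (sc x) with hg
  have hgHS : ∀ n, HS s (g n) (fun β => r (U n + Q n) β * mono (fun j => (s j : ℂ)⁻¹) β) := by
    intro n x hx
    refine (ev_hasSum (sc x) (hscn x hx) (r (U n + Q n))).congr_fun' fun β => ?_
    have : sc x = x * fun j => (s j : ℂ)⁻¹ := rfl
    rw [this, mono_mul]
    ring
  refine ⟨g, fun N => ‖Q N‖, fun n => ‖r (U n + Q n)‖, fun n => (hgHS n).analytic, ?_, ?_,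
    fun N => norm_nonneg _, ?_⟩
  · intro n x hx
    exact norm_ev_le (sc x) (hscn x hx) _
  · intro n β hβ
    rw [(hgHS n).mixed hs0 β]
    have h1 : β = (β - a) + a := by
      funext j
      exact (Nat.sub_add_cancel (hβ j)).symm
    have h2 := hr (U n + Q n) (β - a)
    rw [← h1] at h2
    rw [h2, zero_mul]
  · intro N x hx
    have hxρ : x ∈ polydisk d ρ := fun j => (hx j).trans (hsρ j)
    set z := sc x with hz
    have hz1 := hscn x hx
    rw [← hz] at hz1
    have eP : ev z hz1 p' = P x := by rw [hpev, hz, hback]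
    have e0 : ev z hz1 F0 = fseq 0 x := by rw [hF0, hz, hback]
    have eU : ∀ n, ev z hz1 (U n) = u n x := fun n => by rw [hU, hz, hback]
    have key : ∀ N, fseq N x = ∑ n ∈ Finset.range N, g n x * P x ^ n
        + ev z hz1 (Q N) * P x ^ N := by
      intro N
      induction N with
      | zero => simp [hQ0, e0]
      | succ N ih =>
        have h1 := hrec N x hxρ
        have h2 := hqr (U N + Q N) z hz1
        rw [← hQs, eP, map_add, eU] at h2
        have h3 : g N x = ev z hz1 (r (U N + Q N)) := rfl
        rw [Finset.sum_range_succ, h3]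
        linear_combination h1 + ih + P x ^ N * h2
    rw [key N, add_sub_cancel_left, norm_mul, norm_pow]
    exact mul_le_mul_of_nonneg_right (norm_ev_le z hz1 _) (by positivity)

end PA

/-- **Standard form of `P`-asymptotic expansions** (Theorem 4.7, part (1)).
If a holomorphic `f` on a `P`-sector admits a `P`-asymptotic expansion in the estimate
sense (witnessed by `fseq`, `Kseq`), then there are bounded holomorphic coefficients `g_n`
with Taylor coefficients supported off `a + ℕ^d` (where `a` is the `ℓ`-minimal exponent of
`P`) such that `|f − Σ_{n<N} g_n·P^n| ≤ L_N·|P|^N` on the sector near `0`. -/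
theorem standard_form_of_P_asymptotic_expansions
    (d : ℕ) (hd : 1 ≤ d) (ℓ : Fin d → ℝ) (hℓpos : ∀ j, 0 < ℓ j)
    (hℓinj : Function.Injective fun β : Fin d → ℕ => ∑ j, ℓ j * (β j : ℝ))
    (R : ℝ) (hR : 0 < R)
    (P : (Fin d → ℂ) → ℂ) (hP : AnalyticOnNhd ℂ P (polydisk d R))
    (hP0 : P 0 = 0) (hPne : ∃ x ∈ polydisk d R, P x ≠ 0)
    (a : Fin d → ℕ)
    (ha : mixedPartial a P 0 ≠ 0)
    (hamin : ∀ β : Fin d → ℕ, mixedPartial β P 0 ≠ 0 → β ≠ a →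
      ∑ j, ℓ j * (a j : ℝ) < ∑ j, ℓ j * (β j : ℝ))
    (θ₁ θ₂ : ℝ) (hθ : θ₁ < θ₂) (hθ2 : θ₂ ≤ θ₁ + 2 * Real.pi)
    (f : (Fin d → ℂ) → ℂ) (hf : AnalyticOnNhd ℂ f (PSector d P θ₁ θ₂ R))
    (ρ₁ : ℝ) (hρ₁ : 0 < ρ₁)
    (fseq : ℕ → (Fin d → ℂ) → ℂ)
    (hfseqA : ∀ n, AnalyticOnNhd ℂ (fseq n) (polydisk d ρ₁))
    (hfseqB : ∀ n, ∃ M, ∀ x ∈ polydisk d ρ₁, ‖fseq n x‖ ≤ M)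
    (Kseq : ℕ → ℝ) (hKseq : ∀ n, 0 < Kseq n)
    (hest : ∀ n, ∀ x ∈ PSector d P θ₁ θ₂ R ∩ polydisk d ρ₁,
      ‖f x - fseq n x‖ ≤ Kseq n * ‖P x‖ ^ n) :
    ∃ ρ > 0, ∃ g : ℕ → (Fin d → ℂ) → ℂ, ∃ L : ℕ → ℝ,
      (∀ n, AnalyticOnNhd ℂ (g n) (polydisk d ρ)) ∧
      (∀ n, ∃ M, ∀ x ∈ polydisk d ρ, ‖g n x‖ ≤ M) ∧
      (∀ n, ∀ β : Fin d → ℕ, (∀ j, a j ≤ β j) → mixedPartial β (g n) 0 = 0) ∧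
      (∀ N, 0 < L N) ∧
      (∀ N : ℕ, ∀ x ∈ PSector d P θ₁ θ₂ R ∩ polydisk d ρ,
        ‖f x - ∑ n ∈ Finset.range N, g n x * P x ^ n‖ ≤
          L N * ‖P x‖ ^ N) := by
  obtain ⟨ρ₂, hρ₂, hρ₂R, hρ₂ρ, u, hu, hrec⟩ :=
    PA.exists_u hR hP hPne hθ hρ₁ hfseqA hKseq hest
  have hρ₃ : 0 < ρ₂ / 2 := by positivity
  have hρ₃₂ : ρ₂ / 2 < ρ₂ := by linarith
  have hmono : ∀ r, ρ₂ ≤ r → polydisk d ρ₂ ⊆ polydisk d r := fun r hr x hx j =>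
    (hx j).trans_le hr
  obtain ⟨p, hp⟩ := PA.exists_HS hρ₃ hρ₃₂ ((hP.mono (hmono R hρ₂R)).differentiableOn)
  obtain ⟨c0, hc0⟩ := PA.exists_HS hρ₃ hρ₃₂
    (((hfseqA 0).mono (hmono ρ₁ hρ₂ρ)).differentiableOn)
  choose c hc using fun n => PA.exists_HS hρ₃ hρ₃₂ (hu n)
  have hmix := PA.HS.mixed (fun _ => hρ₃) hp
  obtain ⟨s, hs0, hsρ, hps⟩ := PA.choose_s ℓ hℓpos hρ₃ hp a (fun h => ha ((hmix a).2 h))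
    (fun β hβ hβa => hamin β (fun h => hβ ((hmix β).1 h)) hβa)
  obtain ⟨g, B, M, hgA, hgM, hgmix, hB, hgB⟩ := PA.assemble hρ₃ hp a hs0 hsρ hps hc0 hc
    (fun n x hx => hrec n x (fun j => (hx j).trans hρ₃₂))
  obtain ⟨ρ, hρ, hρs⟩ : ∃ ρ > 0, ∀ j, ρ ≤ s j := by
    haveI : Nonempty (Fin d) := ⟨⟨0, hd⟩⟩
    obtain ⟨j₀, hj₀⟩ := Finite.exists_min s
    exact ⟨s j₀, hs0 j₀, hj₀⟩
  have hsub : ∀ x ∈ polydisk d ρ, ∀ j, ‖x j‖ < s j := fun x hx j => (hx j).trans_le (hρs j)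
  refine ⟨ρ, hρ, g, fun N => Kseq N + B N, fun n => (hgA n).mono hsub,
    fun n => ⟨M n, fun x hx => hgM n x (hsub x hx)⟩, hgmix,
    fun N => add_pos_of_pos_of_nonneg (hKseq N) (hB N), ?_⟩
  intro N x hx
  have hxs := hsub x hx.2
  have hxρ : x ∈ polydisk d ρ₁ := fun j => by
    have h1 := hxs j
    have h2 := hsρ j
    linarith
  have e1 := hest N x ⟨hx.1, hxρ⟩
  have e2 := hgB N x hxs
  calc ‖f x - ∑ n ∈ Finset.range N, g n x * P x ^ n‖
      = ‖(f x - fseq N x) + (fseq N x - ∑ n ∈ Finset.range N, g n x * P x ^ n)‖ := by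
        congr 1; ring
    _ ≤ ‖f x - fseq N x‖ + ‖fseq N x - ∑ n ∈ Finset.range N, g n x * P x ^ n‖ := norm_add_le _ _
    _ ≤ (Kseq N + B N) * ‖P x‖ ^ N := by rw [add_mul]; linarith
end
end

section
/- Division by t − P(x) (Lemma 5.1): Let d ≥ 1, P holomorphic on D(0;R) ⊆ ℂ^d, real a < b ≤ a + 2π, r > 0, and let 𝒟 ⊆ D(0;R) be a domain (open and connected). For every holomorphic F : V(a,b;r) × 𝒟 → ℂ satisfying F(P(x), x) = 0 for every x ∈ 𝒟 with P(x) ∈ V(a,b;r), there exists a unique holomorphic H : V(a,b;r) × 𝒟 → ℂ such that F(t,x) = (t − P(x))·H(t,x) for all t ∈ V(a,b;r) and all x ∈ 𝒟. -/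
open Set Complex

noncomputable section

/-- The sector `V(a,b;σ)` in `ℂ`. -/
def CSector (a b σ : ℝ) : Set ℂ :=
  {t | 0 < ‖t‖ ∧ ‖t‖ < σ ∧
    ∃ θ ∈ Set.Ioo a b, t = (‖t‖ : ℂ) * Complex.exp (θ * Complex.I)}

open Filter Topology

lemma multilin_telescope {E : Type*} [NormedAddCommGroup E] [NormedSpace ℂ E] {n : ℕ}
    (f : ContinuousMultilinearMap ℂ (fun _ : Fin (n + 1) => E) ℂ) (v w e : E) (u : ℂ)
    (h : v - w = u • e) :
    f (fun _ => v) - f (fun _ => w) =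
      u * ∑ k : Fin (n + 1),
        f (k.insertNth e (fun i => if k.succAbove i < k then v else w)) := by
  set A : ℕ → ℂ := fun k => f (fun i => if i.val < k then v else w) with hA
  have h1 : f (fun _ => v) - f (fun _ => w) = A (n + 1) - A 0 := by
    simp [hA, Fin.is_lt]
    congr 1; ext1 i; rw [if_pos (Nat.lt_succ_iff.1 i.is_lt)]
  rw [h1, ← Finset.sum_range_sub, ← Fin.sum_univ_eq_sum_range (fun i => A (i + 1) - A i),
    Finset.mul_sum]
  refine Finset.sum_congr rfl fun k _ => ?_
  set m : Fin (n + 1) → E := fun i => if i < k then v else w with hm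
  have e1 : (fun i : Fin (n + 1) => if i.val < k.val + 1 then v else w)
      = Function.update m k v := by
    ext1 i
    by_cases hi : i = k
    · subst hi; simp
    · have : i.val ≠ k.val := fun h => hi (Fin.ext h)
      rw [Function.update_of_ne hi, hm]
      simp only [Fin.lt_def]
      congr 1
      simp; omega
  have e2 : (fun i : Fin (n + 1) => if i.val < k.val then v else w)
      = Function.update m k w := by
    ext1 i
    by_cases hi : i = k
    · subst hi; simp
    · rw [Function.update_of_ne hi, hm]
      simp only [Fin.lt_def]
  have e3 : (k.insertNth e (fun i => if k.succAbove i < k then v else w) : Fin (n + 1) → E)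
      = Function.update m k e := by
    rw [← Fin.insertNth_removeNth]
    rfl
  simp only [hA]
  rw [e1, e2, e3, ← f.map_update_sub, h, f.map_update_smul, smul_eq_mul]

lemma div_local {X : Type*} [NormedAddCommGroup X] [NormedSpace ℂ X] (G : ℂ × X → ℂ) (x0 : X)
    (hG : AnalyticAt ℂ G (0, x0)) (h0 : ∀ᶠ x in 𝓝 x0, G (0, x) = 0) :
    ∃ K : ℂ × X → ℂ, AnalyticAt ℂ K (0, x0) ∧ ∀ᶠ z in 𝓝 ((0, x0) : ℂ × X), G z = z.1 * K z := by
  obtain ⟨p, hp⟩ := hG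
  set π : (ℂ × X) →L[ℂ] (ℂ × X) :=
    (ContinuousLinearMap.inr ℂ ℂ X).comp (ContinuousLinearMap.snd ℂ ℂ X) with hπ
  set e : ℂ × X := (1, 0) with he
  have hπn : ‖π‖ ≤ 1 := by
    refine ContinuousLinearMap.opNorm_le_bound _ zero_le_one fun z => ?_
    simp [hπ, Prod.norm_def]
  have hen : ‖e‖ = 1 := by simp [he, Prod.norm_def]
  set q : FormalMultilinearSeries ℂ (ℂ × X) ℂ := fun n =>
    ∑ k : Fin (n + 1), ((p (n + 1)).curryMid k e).compContinuousLinearMap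
      (fun i => if k.succAbove i < k then ContinuousLinearMap.id ℂ (ℂ × X) else π) with hq
  have hqn : ∀ n, ‖q n‖ ≤ (n + 1) * ‖p (n + 1)‖ := by
    intro n
    refine (norm_sum_le _ _).trans ?_
    have : ∀ k ∈ (Finset.univ : Finset (Fin (n + 1))),
      ‖((p (n + 1)).curryMid k e).compContinuousLinearMap
      (fun i => if k.succAbove i < k then ContinuousLinearMap.id ℂ (ℂ × X) else π)‖
        ≤ ‖p (n + 1)‖ := by
      intro k _
      refine (ContinuousMultilinearMap.norm_compContinuousLinearMap_le _ _).trans ?_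
      have h1 : ‖(p (n + 1)).curryMid k e‖ ≤ ‖p (n + 1)‖ := by
        have := ((p (n + 1)).curryMid k).le_opNorm e
        rwa [hen, mul_one, ContinuousMultilinearMap.norm_curryMid] at this
      have h2 : ∏ i : Fin n, ‖(if k.succAbove i < k then
          ContinuousLinearMap.id ℂ (ℂ × X) else π)‖ ≤ 1 := by
        refine Finset.prod_le_one (fun i _ => norm_nonneg _) fun i _ => ?_
        split_ifs
        · exact ContinuousLinearMap.norm_id_le
        · exact hπn
      calc _ ≤ ‖p (n + 1)‖ * 1 := by gcongr
        _ = _ := mul_one _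
    refine (Finset.sum_le_sum this).trans ?_
    simp
  have hqapp : ∀ n (z : ℂ × X), p (n + 1) (fun _ => z) - p (n + 1) (fun _ => π z)
      = z.1 * q n (fun _ => z) := by
    intro n z
    rw [multilin_telescope (p (n + 1)) z (π z) e z.1 (by ext1 <;> simp [hπ, he])]
    congr 1
    simp only [hq, ContinuousMultilinearMap.sum_apply,
      ContinuousMultilinearMap.compContinuousLinearMap_apply,
      ContinuousMultilinearMap.curryMid_apply]
    refine Finset.sum_congr rfl fun k _ => ?_
    congr 2
    ext1 i
    split_ifs <;> simp
  have hqr : 0 < q.radius := by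
    have hpr : 0 < p.radius := hp.radius_pos
    obtain ⟨r, hr0, hr⟩ := ENNReal.lt_iff_exists_nnreal_btwn.1 hpr
    have hr0' : 0 < r := by exact_mod_cast hr0
    have hr0r : 0 < (r : ℝ) := by exact_mod_cast hr0'
    obtain ⟨C, hC, hb⟩ := p.norm_mul_pow_le_of_lt_radius hr
    have : ((r / 2 : NNReal) : ENNReal) ≤ q.radius := by
      refine q.le_radius_of_bound (C / r) fun n => ?_
      have h2 : ((n : ℝ) + 1) ≤ 2 ^ n := by exact_mod_cast Nat.lt_two_pow_self
      have h3 := hb (n + 1)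
      rw [le_div_iff₀ hr0r]
      calc ‖q n‖ * ((r / 2 : NNReal) : ℝ) ^ n * r
          ≤ ((n + 1) * ‖p (n + 1)‖) * ((r / 2 : NNReal) : ℝ) ^ n * r := by
            gcongr; exact hqn n
        _ ≤ (2 ^ n * ‖p (n + 1)‖) * ((r / 2 : NNReal) : ℝ) ^ n * r := by gcongr
        _ = ‖p (n + 1)‖ * r ^ (n + 1) := by
            push_cast
            rw [div_pow, pow_succ]; field_simp
        _ ≤ C := h3
    refine lt_of_lt_of_le ?_ this
    exact_mod_cast half_pos hr0'
  have hqs := q.hasFPowerSeriesOnBall hqr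
  refine ⟨fun z => q.sum (z - (0, x0)), ?_, ?_⟩
  · have h1 : AnalyticAt ℂ q.sum (((0, x0) : ℂ × X) - (0, x0)) := by
      rw [sub_self]; exact hqs.analyticAt
    exact h1.comp' (g := q.sum) (f := fun z : ℂ × X => z - (0, x0)) (by fun_prop)
  · have E1 := hp.eventually_hasSum_sub
    have E2 : ∀ᶠ z in 𝓝 ((0, x0) : ℂ × X), HasSum (fun n => p n fun _ => ((0, z.2) : ℂ × X) - (0, x0)) (G (0, z.2)) := by
      have : Tendsto (fun z : ℂ × X => ((0, z.2) : ℂ × X)) (𝓝 (0, x0)) (𝓝 (0, x0)) := by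
        have : Continuous (fun z : ℂ × X => ((0, z.2) : ℂ × X)) := by fun_prop
        exact this.tendsto' _ _ rfl
      exact this.eventually E1
    have E3 : ∀ᶠ z in 𝓝 ((0, x0) : ℂ × X), G (0, z.2) = 0 :=
      (continuous_snd.tendsto' ((0, x0) : ℂ × X) x0 rfl).eventually h0
    have E4 : ∀ᶠ z in 𝓝 ((0, x0) : ℂ × X),
        HasSum (fun n => q n fun _ => z - (0, x0)) (q.sum (z - (0, x0))) := by
      have hc : Tendsto (fun z : ℂ × X => z - (0, x0)) (𝓝 (0, x0)) (𝓝 0) := by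
        have : Continuous (fun z : ℂ × X => z - (0, x0)) := by fun_prop
        exact this.tendsto' _ _ (by simp)
      have := hc.eventually hqs.eventually_hasSum
      simpa using this
    filter_upwards [E1, E2, E3, E4] with z h1 h2 h3 h4
    have hd := h1.sub h2
    rw [h3, sub_zero] at hd
    have hπz : ((0, z.2) : ℂ × X) - (0, x0) = π (z - (0, x0)) := by simp [hπ]
    rw [hπz] at hd
    rw [← hasSum_nat_add_iff' 1] at hd
    simp only [hqapp] at hd
    have h5 := h4.mul_left ((z - (0, x0)).1)
    have h6 := hd.unique h5
    have hz : p 0 (fun _ => z - (0, x0)) = p 0 (fun _ => π (z - (0, x0))) := by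
      congr 1; ext1 i; exact i.elim0
    simpa [hz] using h6

lemma isOpen_CSector (a b r : ℝ) : IsOpen (CSector a b r) := by
  have : CSector a b r = (Complex.exp '' (Complex.im ⁻¹' Set.Ioo a b)) ∩ {t | ‖t‖ < r} := by
    ext t
    constructor
    · rintro ⟨h1, h2, θ, hθ, h⟩
      refine ⟨⟨(Real.log ‖t‖ : ℂ) + θ * Complex.I, by simpa using hθ, ?_⟩, h2⟩
      rw [Complex.exp_add, ← Complex.ofReal_exp, Real.exp_log h1, ← h]
    · rintro ⟨⟨z, hz, rfl⟩, h2⟩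
      refine ⟨by simp, h2, z.im, hz, ?_⟩
      rw [Complex.norm_exp, Complex.ofReal_exp, ← Complex.exp_add, Complex.re_add_im]
  rw [this]
  exact (Complex.isOpenMap_exp _ (isOpen_Ioo.preimage Complex.continuous_im)).inter
    (isOpen_lt continuous_norm continuous_const)

theorem division_by_t_minus_P
    (d : ℕ) (hd : 1 ≤ d) (R : ℝ) (hR : 0 < R)
    (P : (Fin d → ℂ) → ℂ) (hP : AnalyticOnNhd ℂ P (polydisk d R))
    (a b : ℝ) (hab : a < b) (hab2 : b ≤ a + 2 * Real.pi) (r : ℝ) (hr : 0 < r)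
    (𝒟 : Set (Fin d → ℂ)) (h𝒟o : IsOpen 𝒟) (h𝒟c : IsConnected 𝒟)
    (h𝒟sub : 𝒟 ⊆ polydisk d R)
    (F : ℂ × (Fin d → ℂ) → ℂ) (hF : AnalyticOnNhd ℂ F (CSector a b r ×ˢ 𝒟))
    (hF0 : ∀ x ∈ 𝒟, P x ∈ CSector a b r → F (P x, x) = 0) :
    ∃ H : ℂ × (Fin d → ℂ) → ℂ,
      AnalyticOnNhd ℂ H (CSector a b r ×ˢ 𝒟) ∧
      (∀ t ∈ CSector a b r, ∀ x ∈ 𝒟, F (t, x) = (t - P x) * H (t, x)) ∧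
      ∀ H' : ℂ × (Fin d → ℂ) → ℂ,
        AnalyticOnNhd ℂ H' (CSector a b r ×ˢ 𝒟) →
        (∀ t ∈ CSector a b r, ∀ x ∈ 𝒟, F (t, x) = (t - P x) * H' (t, x)) →
        Set.EqOn H H' (CSector a b r ×ˢ 𝒟) := by
  classical
  have hVo := isOpen_CSector a b r
  refine ⟨fun z => if z.1 = P z.2 then deriv (fun s => F (s, z.2)) z.1
    else F z / (z.1 - P z.2), ?_, ?_, ?_⟩
  · rintro ⟨t0, x0⟩ ⟨ht0, hx0⟩
    simp only at ht0 hx0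
    have hPa : AnalyticAt ℂ P x0 := hP x0 (h𝒟sub hx0)
    have hPa' : AnalyticAt ℂ (fun z : ℂ × (Fin d → ℂ) => P z.2) (t0, x0) :=
      AnalyticAt.fun_comp (g := P) (f := fun z : ℂ × (Fin d → ℂ) => z.2) hPa analyticAt_snd
    have hsub : AnalyticAt ℂ (fun z : ℂ × (Fin d → ℂ) => z.1 - P z.2) (t0, x0) :=
      analyticAt_fst.sub hPa'
    have hFa : AnalyticAt ℂ F (t0, x0) := hF _ ⟨ht0, hx0⟩
    by_cases hne : t0 = P x0
    · subst hne
      set G : ℂ × (Fin d → ℂ) → ℂ := fun z => F (z.1 + P z.2, z.2) with hGdef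
      have hPa0 : AnalyticAt ℂ (fun z : ℂ × (Fin d → ℂ) => P z.2) (0, x0) :=
        AnalyticAt.fun_comp (g := P) (f := fun z : ℂ × (Fin d → ℂ) => z.2) hPa analyticAt_snd
      have hG : AnalyticAt ℂ G (0, x0) := by
        refine AnalyticAt.fun_comp (g := F)
          (f := fun z : ℂ × (Fin d → ℂ) => (z.1 + P z.2, z.2)) ?_
          ((analyticAt_fst.add hPa0).prod analyticAt_snd)
        simpa using hFa
      have hPV : ∀ᶠ x in 𝓝 x0, P x ∈ CSector a b r :=
        hPa.continuousAt.eventually (hVo.mem_nhds ht0)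
      have h𝒟 : ∀ᶠ x in 𝓝 x0, x ∈ 𝒟 := h𝒟o.mem_nhds hx0
      have h0 : ∀ᶠ x in 𝓝 x0, G (0, x) = 0 := by
        filter_upwards [hPV, h𝒟] with x h1 h2
        simpa [hGdef] using hF0 x h2 h1
      obtain ⟨K, hK, hGK⟩ := div_local G x0 hG h0
      set φ : ℂ × (Fin d → ℂ) → ℂ × (Fin d → ℂ) := fun z => (z.1 - P z.2, z.2) with hφ
      have hφa : AnalyticAt ℂ φ (P x0, x0) := hsub.prod analyticAt_snd
      have hφ0 : φ (P x0, x0) = (0, x0) := by simp [hφ]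
      have hKa : AnalyticAt ℂ (fun z => K (φ z)) (P x0, x0) :=
        AnalyticAt.fun_comp (by rw [hφ0]; exact hK) hφa
      refine hKa.congr ?_
      have hφt : Tendsto φ (𝓝 (P x0, x0)) (𝓝 (0, x0)) := by
        have := hφa.continuousAt.tendsto
        rwa [hφ0] at this
      have hE : ∀ᶠ z in 𝓝 (P x0, x0), F z = (z.1 - P z.2) * K (φ z) ∧ AnalyticAt ℂ K (φ z) := by
        filter_upwards [hφt.eventually hGK, hφt.eventually hK.eventually_analyticAt] with z hz hz2
        exact ⟨by simpa [hGdef, hφ] using hz, hz2⟩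
      filter_upwards [hE.eventually_nhds] with z hz
      obtain ⟨hz1, hz2⟩ := hz.self_of_nhds
      split_ifs with h
      · obtain ⟨t, x⟩ := z
        simp only at h
        subst h
        have hs : ∀ᶠ s in 𝓝 (P x), F (s, x) = (s - P x) * K (s - P x, x) := by
          have : Tendsto (fun s : ℂ => (s, x)) (𝓝 (P x)) (𝓝 (P x, x)) := by
            have : Continuous (fun s : ℂ => (s, x)) := by fun_prop
            exact this.tendsto _
          exact (this.eventually hz).mono fun s hs => hs.1
        have hd : DifferentiableAt ℂ (fun s : ℂ => K (s - P x, x)) (P x) := by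
          refine DifferentiableAt.fun_comp' (g := K) (f := fun s : ℂ => (s - P x, x)) (P x)
            hz2.differentiableAt (by fun_prop)
        have h1 : HasDerivAt (fun s : ℂ => (s - P x) * K (s - P x, x))
            (1 * K (P x - P x, x) + (P x - P x) * deriv (fun s : ℂ => K (s - P x, x)) (P x)) (P x) :=
          ((hasDerivAt_id (P x)).sub_const (P x)).mul hd.hasDerivAt
        have h2 := (h1.congr_of_eventuallyEq hs).deriv
        simp only [hφ]
        rw [h2]; simp
      · rw [hz1, mul_div_cancel_left₀ _ (sub_ne_zero.2 h)]
    · have hq : AnalyticAt ℂ (fun z => F z / (z.1 - P z.2)) (t0, x0) :=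
        hFa.div hsub (sub_ne_zero.2 hne)
      refine hq.congr ?_
      have := hsub.continuousAt.eventually_ne (sub_ne_zero.2 hne)
      filter_upwards [this] with z hz
      rw [if_neg (sub_ne_zero.1 hz)]
  · intro t ht x hx
    by_cases h : t = P x
    · have := hF0 x hx (h ▸ ht)
      simp [h, this]
    · simp only [h, if_false]
      rw [mul_div_cancel₀ _ (sub_ne_zero.2 h)]
  · intro H' hH' hH'e
    rintro ⟨t, x⟩ ⟨ht, hx⟩
    simp only at ht hx
    by_cases h : t = P x
    · have hs : ∀ᶠ s in 𝓝 t, F (s, x) = (s - P x) * H' (s, x) := by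
        filter_upwards [hVo.mem_nhds ht] with s hs using hH'e s hs x hx
      have hd : DifferentiableAt ℂ (fun s : ℂ => H' (s, x)) t :=
        DifferentiableAt.fun_comp' (g := H') (f := fun s : ℂ => (s, x)) t
          (hH' (t, x) ⟨ht, hx⟩).differentiableAt (by fun_prop)
      have h1 : HasDerivAt (fun s : ℂ => (s - P x) * H' (s, x))
          (1 * H' (t, x) + (t - P x) * deriv (fun s : ℂ => H' (s, x)) t) t :=
        ((hasDerivAt_id t).sub_const (P x)).mul hd.hasDerivAt
      have h2 := (h1.congr_of_eventuallyEq hs).deriv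
      simp only [h, if_true]
      rw [h] at h2
      rw [h2]; simp
    · simp only [h, if_false]
      rw [hH'e t ht x hx, mul_div_cancel_left₀ _ (sub_ne_zero.2 h)]
end
end
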